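/- arXiv:1604.03387 — 3 statements merged into one kernel-verified Lean document; each statement's English description precedes it below -/
import Mathlib

section
/- Let p ∈ (1,∞). Let μ_k (k ∈ ℕ) and μ be Borel probability measures on ℝ^d that are absolutely continuous with respect to Lebesgue measure, and let ν_k and ν be Borel probability measures on ℝ^d, all with finite p-th moments. Suppose d_p(μ_k, μ) → 0 and d_p(ν_k, ν) → 0 as k → ∞. Let T_k, T : ℝ^d → ℝ^d be Borel maps with (T_k)_# μ_k = ν_k and T_# μ = ν, such that the couplings (id × T_k)_# μ_k and (id × T)_# μ are optimal, i.e. achieve d_p(μ_k, ν_k)^p and d_p(μ, ν)^p respectively. Then (μ_k, T_k) converges to (μ, T) in the TL^p sense: inf over couplings θ of μ and μ_k of ∫ (|x − y|^p + |T(x) − T_k(y)|^p) dθ(x,y) → 0 as k → ∞. -/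
open Set MeasureTheory Filter
open scoped ENNReal Topology

/-- The `p`-th power `L^p`-Wasserstein cost between two measures on `ℝ^d`: the infimum
over couplings of the integral of `|x − y|^p`. -/
noncomputable def WpCost {d : ℕ} (p : ℝ)
    (μ ν : Measure (EuclideanSpace ℝ (Fin d))) : ℝ≥0∞ :=
  sInf { C | ∃ π : Measure (EuclideanSpace ℝ (Fin d) × EuclideanSpace ℝ (Fin d)),
    π.map Prod.fst = μ ∧ π.map Prod.snd = ν ∧
    C = ∫⁻ q, ENNReal.ofReal (‖q.1 - q.2‖ ^ p) ∂π }

section PartA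
variable {E : Type*} [NormedAddCommGroup E] [InnerProductSpace ℝ E]

/-- strict monotonicity of the gradient of `‖x‖ ^ p` -/
lemma tlp_strict_mono {p : ℝ} (hp : 1 < p) {a b : E} (hab : a ≠ b) :
    0 < (p * ‖a‖ ^ (p - 2)) * inner ℝ a (a - b) - (p * ‖b‖ ^ (p - 2)) * inner ℝ b (a - b) := by
  have key : ∀ x : E, ‖x‖ ^ (p - 2) * ‖x‖ ^ 2 = ‖x‖ ^ (p - 1) * ‖x‖ ∧
      ‖x‖ ^ (p - 2) * ‖x‖ = ‖x‖ ^ (p - 1) := by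
    intro x
    rcases eq_or_ne x 0 with rfl | hx
    · simp [Real.zero_rpow (show p - 1 ≠ 0 by linarith)]
    · have hx' : 0 < ‖x‖ := norm_pos_iff.mpr hx
      have : ‖x‖ ^ (p - 2) * ‖x‖ = ‖x‖ ^ (p - 1) := by
        rw [← Real.rpow_add_one hx'.ne']; congr 1; ring
      refine ⟨?_, this⟩
      rw [← this]; ring
  obtain ⟨ha2, ha1⟩ := key a
  obtain ⟨hb2, hb1⟩ := key b
  have e : (p * ‖a‖ ^ (p - 2)) * inner ℝ a (a - b) - (p * ‖b‖ ^ (p - 2)) * inner ℝ b (a - b)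
      = p * ((‖a‖ ^ (p - 1) - ‖b‖ ^ (p - 1)) * (‖a‖ - ‖b‖) +
        (‖a‖ ^ (p - 2) + ‖b‖ ^ (p - 2)) * (‖a‖ * ‖b‖ - inner ℝ a b)) := by
    rw [inner_sub_right, inner_sub_right, real_inner_self_eq_norm_sq, real_inner_self_eq_norm_sq,
      real_inner_comm a b]
    linear_combination p * ha2 + p * hb2 - p * ‖b‖ * ha1 - p * ‖a‖ * hb1
  rw [e]
  apply mul_pos (by linarith)
  have hcs := real_inner_le_norm a b
  have h2 : 0 ≤ (‖a‖ ^ (p - 2) + ‖b‖ ^ (p - 2)) * (‖a‖ * ‖b‖ - inner ℝ a b) :=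
    mul_nonneg (by positivity) (by linarith)
  rcases lt_trichotomy ‖a‖ ‖b‖ with h | h | h
  · have := Real.rpow_lt_rpow (norm_nonneg a) h (show 0 < p - 1 by linarith)
    have := mul_pos_of_neg_of_neg (sub_neg.mpr this) (sub_neg.mpr h)
    linarith
  · have hb : 0 < ‖b‖ := by
      rcases eq_or_ne b 0 with rfl | hb
      · exact absurd (by simpa using h) hab
      · exact norm_pos_iff.mpr hb
    have : inner ℝ a b ≠ ‖a‖ * ‖b‖ := by
      intro hh
      apply hab
      have : ‖a - b‖ ^ 2 = 0 := by
        rw [norm_sub_sq_real, hh, h]; ring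
      exact sub_eq_zero.mp (norm_eq_zero.mp (pow_eq_zero_iff (two_ne_zero) |>.mp this))
    have h3 : 0 < ‖a‖ * ‖b‖ - inner ℝ a b := by
      have := lt_of_le_of_ne hcs this; linarith
    have h4 : 0 < (‖a‖ ^ (p - 2) + ‖b‖ ^ (p - 2)) := by
      have := Real.rpow_pos_of_pos hb (p - 2)
      positivity
    have := mul_pos h4 h3
    have e0 : (‖a‖ ^ (p - 1) - ‖b‖ ^ (p - 1)) * (‖a‖ - ‖b‖) = 0 := by rw [h]; simp
    linarith
  · have := Real.rpow_lt_rpow (norm_nonneg b) h (show 0 < p - 1 by linarith)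
    have := mul_pos (sub_pos.mpr this) (sub_pos.mpr h)
    linarith

lemma tlp_local {p : ℝ} (hp : 1 < p) {a b : E} (hab : a ≠ b) :
    ∃ r > (0 : ℝ), ∃ s > (0 : ℝ), ∃ t₀ > (0 : ℝ), ∀ t, 0 < t → t < t₀ → ∀ v : E, ‖v - (a - b)‖ ≤ s →
      ∀ a' : E, ‖a' - a‖ < r →
        0 < (‖a' + t • v‖ ^ p - ‖a'‖ ^ p) - (‖b + t • v‖ ^ p - ‖b‖ ^ p) := by
  have hst : ∀ x : E, HasStrictFDerivAt (fun x : E => ‖x‖ ^ p)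
      ((p * ‖x‖ ^ (p - 2)) • innerSL ℝ x) x := fun x =>
    (contDiff_norm_rpow hp).contDiffAt.hasStrictFDerivAt' (hasFDerivAt_norm_rpow x hp) one_ne_zero
  set La := (p * ‖a‖ ^ (p - 2)) • innerSL ℝ a with hLa
  set Lb := (p * ‖b‖ ^ (p - 2)) • innerSL ℝ b with hLb
  have hpos : 0 < La (a - b) - Lb (a - b) := by
    simpa [hLa, hLb] using tlp_strict_mono hp hab
  set g := La (a - b) - Lb (a - b) with hg
  -- choose s
  have hcont : Continuous (fun v : E => La v - Lb v) := by fun_prop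
  obtain ⟨s₀, hs₀, hs⟩ := Metric.continuous_iff.mp hcont (a - b) (g / 2) (by linarith)
  set M := ‖a - b‖ + s₀ with hM
  have hMpos : 0 < M := by positivity
  set ε := g / (8 * M) with hε
  have hεpos : 0 < ε := by positivity
  have hA := ((hst a).isLittleO.def hεpos)
  have hB := ((hst b).isLittleO.def hεpos)
  obtain ⟨ra, hra, hA⟩ := Metric.eventually_nhds_iff.mp hA
  obtain ⟨rb, hrb, hB⟩ := Metric.eventually_nhds_iff.mp hB
  refine ⟨ra / 2, by positivity, s₀ / 2, by positivity, min (ra / 2) rb / M, by positivity, ?_⟩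
  intro t ht htt v hv a' ha'
  rw [lt_div_iff₀ hMpos, lt_min_iff] at htt
  have hvM : ‖v‖ ≤ M := by
    have := norm_le_insert' v (a - b)
    linarith
  have htv : ‖t • v‖ ≤ t * M := by
    rw [norm_smul, Real.norm_of_nonneg ht.le]; gcongr
  have h1 := hA (y := (a' + t • v, a')) (by
    rw [Prod.dist_eq, max_lt_iff]
    simp only [dist_eq_norm]
    constructor
    · have : a' + t • v - a = (a' - a) + t • v := by abel
      rw [this]
      exact (norm_add_le _ _).trans_lt (by linarith)
    · linarith)
  have h2 := hB (y := (b + t • v, b)) (by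
    rw [Prod.dist_eq, max_lt_iff]
    simp only [dist_eq_norm]
    constructor
    · simp; linarith
    · simpa using hrb)
  have h3 := hs v (by rw [dist_eq_norm]; linarith)
  simp only [add_sub_cancel_left, map_smul, smul_eq_mul] at h1 h2
  rw [Real.norm_eq_abs, abs_le] at h1 h2
  rw [Real.dist_eq, abs_lt] at h3
  have h4 : ε * ‖t • v‖ ≤ t * g / 8 := by
    calc ε * ‖t • v‖ ≤ ε * (t * M) := by gcongr
      _ = t * g / 8 := by rw [hε]; field_simp
  have h5 : t * (g / 2) < t * (La v - Lb v) := by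
    apply mul_lt_mul_of_pos_left _ ht
    linarith
  have : 0 < t * g := by positivity
  nlinarith [h1.1, h2.2]

end PartA
section PartB
variable {E : Type*} [NormedAddCommGroup E] [InnerProductSpace ℝ E] [FiniteDimensional ℝ E]
  [MeasurableSpace E] [BorelSpace E]

lemma tlp_ae_pos {p : ℝ} (hp : 1 < p) (μ : Measure E) [IsProbabilityMeasure μ]
    (hμ : μ ≪ volume) (T : E → E) (hT : Measurable T) :
    ∀ᵐ x ∂μ, ∀ y, y ≠ T x →
      0 < μ {x' | 0 < ‖x - y‖ ^ p + ‖x' - T x'‖ ^ p - ‖x - T x'‖ ^ p - ‖x' - y‖ ^ p} := by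
  set ρ := μ.rnDeriv volume with hρdef
  have hρm : Measurable ρ := Measure.measurable_rnDeriv _ _
  have hρ : volume.withDensity ρ = μ := Measure.withDensity_rnDeriv_eq _ _ hμ
  have hnull : ∀ B : Set E, μ B = 0 → volume ({x | ρ x ≠ 0} ∩ B) = 0 := by
    intro B hB
    rw [← hρ] at hB
    exact (withDensity_apply_eq_zero hρm).mp hB
  have hZ : ∀ᵐ x ∂μ, ρ x ≠ 0 := by
    rw [ae_iff]
    simp only [not_not]
    rw [← hρ, withDensity_apply_eq_zero hρm]
    convert measure_empty (μ := (volume : Measure E))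
    ext x; simp
  have hZm : MeasurableSet {x | ρ x ≠ 0} := (hρm (measurableSet_singleton 0)).compl
  have hcount := TopologicalSpace.countable_countableBasis E
  have hdens : ∀ V ∈ TopologicalSpace.countableBasis E, ∀ K : ℕ, ∀ᵐ x ∂μ, x ∈ {x | ρ x ≠ 0} ∩ T ⁻¹' V →
      ∀ (w : ℝ → E) (δ : ℝ → ℝ) (_ : Tendsto δ (𝓝[>] 0) (𝓝[>] 0))
      (_ : ∀ᶠ j in 𝓝[>] (0 : ℝ), x ∈ Metric.closedBall (w j) (K * δ j)),
      Tendsto (fun j => volume (({x | ρ x ≠ 0} ∩ T ⁻¹' V) ∩ Metric.closedBall (w j) (δ j)) /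
        volume (Metric.closedBall (w j) (δ j))) (𝓝[>] 0) (𝓝 1) := by
    intro V hV K
    have hS : MeasurableSet ({x | ρ x ≠ 0} ∩ T ⁻¹' V) :=
      hZm.inter (hT ((TopologicalSpace.isOpen_of_mem_countableBasis hV).measurableSet))
    have := IsUnifLocDoublingMeasure.ae_tendsto_measure_inter_div (volume : Measure E)
      ({x | ρ x ≠ 0} ∩ T ⁻¹' V) (K : ℝ)
    rw [ae_restrict_iff' hS] at this
    filter_upwards [hμ.ae_le this] with x hx hxS w δ h1 h2
    exact hx hxS w δ h1 h2
  have hdens' : ∀ᵐ x ∂μ, ∀ V ∈ TopologicalSpace.countableBasis E, ∀ K : ℕ,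
      x ∈ {x | ρ x ≠ 0} ∩ T ⁻¹' V →
      ∀ (w : ℝ → E) (δ : ℝ → ℝ) (_ : Tendsto δ (𝓝[>] 0) (𝓝[>] 0))
      (_ : ∀ᶠ j in 𝓝[>] (0 : ℝ), x ∈ Metric.closedBall (w j) (K * δ j)),
      Tendsto (fun j => volume (({x | ρ x ≠ 0} ∩ T ⁻¹' V) ∩ Metric.closedBall (w j) (δ j)) /
        volume (Metric.closedBall (w j) (δ j))) (𝓝[>] 0) (𝓝 1) := by
    rw [ae_ball_iff hcount]
    intro V hV
    rw [ae_all_iff]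
    exact hdens V hV
  filter_upwards [hZ, hdens'] with x hxZ hx y hy
  have hab : x - T x ≠ x - y := fun h => hy (sub_right_injective h).symm
  obtain ⟨r, hr, s, hs, t₀, ht₀, hloc⟩ := tlp_local hp hab
  obtain ⟨V, hV, hTV, hVr⟩ := (TopologicalSpace.isBasis_countableBasis E).exists_subset_of_mem_open
    (Metric.mem_ball_self hr : T x ∈ Metric.ball (T x) r) Metric.isOpen_ball
  obtain ⟨K, hK⟩ := exists_nat_ge (‖y - T x‖ / s)
  have hlim := hx V hV K ⟨hxZ, hTV⟩ (fun t => x + t • (y - T x)) (fun t => t * s) (by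
      refine tendsto_nhdsWithin_iff.mpr ⟨?_, ?_⟩
      · have : Tendsto (fun t : ℝ => t * s) (𝓝 0) (𝓝 (0 * s)) := by
          apply Continuous.tendsto; fun_prop
        rw [zero_mul] at this
        exact this.mono_left nhdsWithin_le_nhds
      · filter_upwards [self_mem_nhdsWithin] with t ht
        exact mul_pos ht hs) (by
      filter_upwards [self_mem_nhdsWithin] with t ht
      have ht : 0 < t := ht
      rw [Metric.mem_closedBall, dist_eq_norm]
      rw [div_le_iff₀ hs] at hK
      have : x - (x + t • (y - T x)) = -(t • (y - T x)) := by abel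
      rw [this, norm_neg, norm_smul, Real.norm_of_nonneg ht.le]
      nlinarith)
  have hev := hlim.eventually (lt_mem_nhds (show (0 : ℝ≥0∞) < 1 by simp))
  have hev2 : ∀ᶠ t in 𝓝[>] (0 : ℝ), t < t₀ := nhdsWithin_le_nhds (gt_mem_nhds ht₀)
  obtain ⟨t, ⟨ht1, ht2⟩, ht3⟩ := ((hev.and hev2).and self_mem_nhdsWithin).exists
  have ht3 : 0 < t := ht3
  rw [pos_iff_ne_zero]
  intro h0
  have h1 := hnull _ h0
  have h2 : volume (({x | ρ x ≠ 0} ∩ T ⁻¹' V) ∩ Metric.closedBall (x + t • (y - T x)) (t * s)) = 0 := by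
    refine measure_mono_null ?_ h1
    rintro x' ⟨⟨hx'Z, hx'V⟩, hx'B⟩
    refine ⟨hx'Z, ?_⟩
    have hTx' : ‖T x' - T x‖ < r := by
      have := hVr hx'V
      rwa [Metric.mem_ball, dist_eq_norm] at this
    rw [Metric.mem_closedBall, dist_eq_norm] at hx'B
    have hv : t • (t⁻¹ • (x' - x)) = x' - x := smul_inv_smul₀ ht3.ne' _
    have h3 := hloc t ht3 ht2 (t⁻¹ • (x' - x)) (by
      have e1 : t⁻¹ • (x' - x) - (x - T x - (x - y)) = t⁻¹ • (x' - (x + t • (y - T x))) := by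
        rw [← sub_sub x' x, smul_sub t⁻¹ (x' - x), inv_smul_smul₀ ht3.ne']
        abel
      rw [e1, norm_smul, norm_inv, Real.norm_of_nonneg ht3.le, inv_mul_le_iff₀ ht3]
      exact hx'B) (x - T x') (by
      have : x - T x' - (x - T x) = -(T x' - T x) := by abel
      rw [this, norm_neg]; exact hTx')
    rw [hv] at h3
    have e2 : x - T x' + (x' - x) = x' - T x' := by abel
    have e3 : x - y + (x' - x) = x' - y := by abel
    rw [e2, e3] at h3
    rw [mem_ofPred_eq]
    linarith
  rw [h2] at ht1
  simp at ht1

end PartB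
section PartC
open ProbabilityTheory

variable {X : Type*} [MeasurableSpace X]

/-- gluing -/
lemma tlp_glue {E : Type*} [MeasurableSpace E] [StandardBorelSpace E] [Nonempty E]
    (θ : Measure X) [IsProbabilityMeasure θ] (f : X → E) (hf : Measurable f)
    (η : Measure (E × E)) [IsProbabilityMeasure η] (h : θ.map f = η.map Prod.fst) :
    ∃ P : Measure (X × E), P.map Prod.fst = θ ∧ P.map (fun q => (f q.1, q.2)) = η := by
  refine ⟨θ ⊗ₘ (η.condKernel.comap f hf), ?_, ?_⟩
  · exact Measure.fst_compProd _ _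
  · have h' : η.fst = θ.map f := h.symm
    conv_rhs => rw [← η.disintegrate η.condKernel, h']
    have hm : Measurable (fun q : X × E => (f q.1, q.2)) := by fun_prop
    ext s hs
    rw [Measure.map_apply hm hs, Measure.compProd_apply (hm hs), Measure.compProd_apply hs,
      lintegral_map (Kernel.measurable_kernel_prodMk_left hs) hf]
    rfl

lemma tlp_isProb_of_map {Y : Type*} [MeasurableSpace Y] {P : Measure X} {ν : Measure Y}
    [IsProbabilityMeasure ν] {f : X → Y} (hf : Measurable f) (h : P.map f = ν) :
    IsProbabilityMeasure P := by
  constructor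
  have : P.map f univ = 1 := by rw [h]; exact measure_univ
  rwa [Measure.map_apply hf MeasurableSet.univ, preimage_univ] at this

end PartC

section PartD

/-- the swap inequality -/
lemma tlp_swap {d : ℕ} {p : ℝ} (hp : 1 < p) (μ ν : Measure (EuclideanSpace ℝ (Fin d)))
    (π : Measure (EuclideanSpace ℝ (Fin d) × EuclideanSpace ℝ (Fin d))) [IsProbabilityMeasure π]
    (h1 : π.map Prod.fst = μ) (h2 : π.map Prod.snd = ν) :
    (∫⁻ z, ENNReal.ofReal (‖z.1.1 - z.1.2‖ ^ p + ‖z.2.1 - z.2.2‖ ^ p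
      - ‖z.1.1 - z.2.2‖ ^ p - ‖z.2.1 - z.1.2‖ ^ p) ∂(π.prod π)) + 2 * WpCost p μ ν
      ≤ 2 * ∫⁻ q, ENNReal.ofReal (‖q.1 - q.2‖ ^ p) ∂π := by
  have hp0 : 0 ≤ p := by linarith
  set A : Set ((EuclideanSpace ℝ (Fin d) × EuclideanSpace ℝ (Fin d)) × (EuclideanSpace ℝ (Fin d) × EuclideanSpace ℝ (Fin d))) := {z | 0 < ‖z.1.1 - z.1.2‖ ^ p + ‖z.2.1 - z.2.2‖ ^ p
      - ‖z.1.1 - z.2.2‖ ^ p - ‖z.2.1 - z.1.2‖ ^ p} with hA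
  have hAm : MeasurableSet A := measurableSet_lt measurable_const (by fun_prop)
  have hAswap : ∀ z, z.swap ∈ A ↔ z ∈ A := by
    rintro ⟨⟨a, b⟩, ⟨a', b'⟩⟩
    simp only [hA, Prod.swap, mem_ofPred_eq]
    constructor <;> intro h <;> linarith
  classical
  set Y : (EuclideanSpace ℝ (Fin d) × EuclideanSpace ℝ (Fin d)) × (EuclideanSpace ℝ (Fin d) × EuclideanSpace ℝ (Fin d)) → EuclideanSpace ℝ (Fin d) := fun z => if z ∈ A then z.2.2 else z.1.2 with hY
  have hYm : Measurable Y := Measurable.ite hAm (by fun_prop) (by fun_prop)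
  set S : (EuclideanSpace ℝ (Fin d) × EuclideanSpace ℝ (Fin d)) × (EuclideanSpace ℝ (Fin d) × EuclideanSpace ℝ (Fin d)) → EuclideanSpace ℝ (Fin d) × EuclideanSpace ℝ (Fin d) := fun z => (z.1.1, Y z) with hS
  have hSm : Measurable S := by fun_prop
  have hsymm : ∀ f : (EuclideanSpace ℝ (Fin d) × EuclideanSpace ℝ (Fin d)) × (EuclideanSpace ℝ (Fin d) × EuclideanSpace ℝ (Fin d)) → ℝ≥0∞, ∫⁻ z, f z.swap ∂(π.prod π) = ∫⁻ z, f z ∂(π.prod π) :=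
    fun f => lintegral_prod_swap f
  have hfst : (π.prod π).map Prod.fst = π := by
    simp [Measure.map_fst_prod]
  have hW : WpCost p μ ν ≤ ∫⁻ z, ENNReal.ofReal (‖z.1.1 - Y z‖ ^ p) ∂(π.prod π) := by
    apply sInf_le
    refine ⟨(π.prod π).map S, ?_, ?_, ?_⟩
    · rw [Measure.map_map measurable_fst hSm, ← h1]
      conv_rhs => rw [← hfst]
      rw [Measure.map_map measurable_fst measurable_fst]
      rfl
    · rw [Measure.map_map measurable_snd hSm, ← h2]
      conv_rhs => rw [← hfst]
      rw [Measure.map_map measurable_snd measurable_fst]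
      refine Measure.ext_of_lintegral _ fun f hf => ?_
      rw [lintegral_map hf (measurable_snd.comp hSm), lintegral_map hf (by fun_prop)]
      have e1 : ∀ z, f ((Prod.snd ∘ S) z) = A.indicator (fun z => f z.2.2) z
          + Aᶜ.indicator (fun z => f z.1.2) z := by
        intro z
        by_cases hz : z ∈ A <;> simp [hS, hY, hz]
      have e2 : ∀ z : (EuclideanSpace ℝ (Fin d) × EuclideanSpace ℝ (Fin d)) × (EuclideanSpace ℝ (Fin d) × EuclideanSpace ℝ (Fin d)), f ((Prod.snd ∘ Prod.fst) z) =
          A.indicator (fun z => f z.1.2) z + Aᶜ.indicator (fun z => f z.1.2) z := by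
        intro z
        by_cases hz : z ∈ A <;> simp [hz]
      rw [lintegral_congr e1, lintegral_congr e2]
      have hm12 : Measurable (fun z : (EuclideanSpace ℝ (Fin d) × EuclideanSpace ℝ (Fin d)) ×
          (EuclideanSpace ℝ (Fin d) × EuclideanSpace ℝ (Fin d)) => f z.1.2) :=
        hf.comp (measurable_snd.comp measurable_fst)
      rw [lintegral_add_right _ (hm12.indicator hAm.compl),
        lintegral_add_right _ (hm12.indicator hAm.compl)]
      congr 1
      rw [← hsymm]
      refine lintegral_congr fun z => ?_
      by_cases hz : z ∈ A
      · have := (hAswap z).mpr hz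
        simp [hz, this]
      · have : z.swap ∉ A := fun h => hz ((hAswap z).mp h)
        simp [hz, this]
    · rw [lintegral_map (by fun_prop) hSm]
  have hW2 : 2 * WpCost p μ ν ≤ ∫⁻ z, (ENNReal.ofReal (‖z.1.1 - Y z‖ ^ p) +
      ENNReal.ofReal (‖z.2.1 - Y z.swap‖ ^ p)) ∂(π.prod π) := by
    rw [lintegral_add_left (by fun_prop), two_mul]
    refine add_le_add hW ?_
    rw [← hsymm] at hW
    exact hW
  have hR : 2 * ∫⁻ q, ENNReal.ofReal (‖q.1 - q.2‖ ^ p) ∂π =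
      ∫⁻ z, (ENNReal.ofReal (‖z.1.1 - z.1.2‖ ^ p) + ENNReal.ofReal (‖z.2.1 - z.2.2‖ ^ p))
        ∂(π.prod π) := by
    have e : ∫⁻ q, ENNReal.ofReal (‖q.1 - q.2‖ ^ p) ∂π =
        ∫⁻ z, ENNReal.ofReal (‖z.1.1 - z.1.2‖ ^ p) ∂(π.prod π) := by
      conv_lhs => rw [← hfst]
      rw [lintegral_map (by fun_prop) measurable_fst]
    rw [lintegral_add_left (by fun_prop), two_mul, e]
    congr 1
    rw [← hsymm]
    rfl
  rw [hR]
  refine (add_le_add_right hW2 _).trans ?_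
  rw [← lintegral_add_left (by fun_prop)]
  refine lintegral_mono fun z => ?_
  have n1 := Real.rpow_nonneg (norm_nonneg (z.1.1 - z.1.2)) p
  have n2 := Real.rpow_nonneg (norm_nonneg (z.2.1 - z.2.2)) p
  have n3 := Real.rpow_nonneg (norm_nonneg (z.1.1 - z.2.2)) p
  have n4 := Real.rpow_nonneg (norm_nonneg (z.2.1 - z.1.2)) p
  by_cases hz : z ∈ A
  · have hz' := (hAswap z).mpr hz
    simp only [hY, hz, hz', if_true, Prod.fst_swap, Prod.snd_swap]
    rw [← ENNReal.ofReal_add n3 n4, ← ENNReal.ofReal_add n1 n2, ← ENNReal.ofReal_add _ (by linarith)]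
    · apply ENNReal.ofReal_le_ofReal; linarith
    · exact le_of_lt (by simpa only [hA, mem_ofPred_eq] using hz)
  · have hz' : z.swap ∉ A := fun h => hz ((hAswap z).mp h)
    simp only [hY, hz, hz', if_false, Prod.fst_swap, Prod.snd_swap]
    rw [ENNReal.ofReal_of_nonpos (not_lt.mp (by simpa only [hA, mem_ofPred_eq] using hz)), zero_add]

end PartD
section PartE
variable {E : Type*} [NormedAddCommGroup E] [InnerProductSpace ℝ E] [FiniteDimensional ℝ E]
  [MeasurableSpace E] [BorelSpace E]

lemma tlp_conv {p : ℝ} (hp : 1 < p) (μ ν : Measure E) [IsProbabilityMeasure μ]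
    [IsProbabilityMeasure ν] (T : E → E) (hT : Measurable T) (hTμ : μ.map T = ν)
    (hν : (∫⁻ y, ENNReal.ofReal (‖y‖ ^ p) ∂ν) < ⊤)
    (F : E × E → ℝ≥0∞) (hFm : Measurable F) (hFc : ∀ x, Continuous (fun y => F (x, y)))
    (hFpos : ∀ᵐ x ∂μ, ∀ y, y ≠ T x → 0 < F (x, y))
    (σ : ℕ → Measure (E × E)) (h1 : ∀ k, (σ k).map Prod.fst = μ) (h2 : ∀ k, (σ k).map Prod.snd = ν)
    (hlim : Tendsto (fun k => ∫⁻ q, F q ∂(σ k)) atTop (𝓝 0)) :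
    Tendsto (fun k => ∫⁻ q, ENNReal.ofReal (‖T q.1 - q.2‖ ^ p) ∂(σ k)) atTop (𝓝 0) := by
  have hp0 : 0 < p := by linarith
  have : ProperSpace E := FiniteDimensional.proper ℝ E
  rw [ENNReal.tendsto_nhds_zero]
  intro ε hε
  set e : ℝ≥0∞ := min ε 1 / 4 with he
  have hm1 : min ε 1 ≠ ⊤ := ne_top_of_le_ne_top ENNReal.one_ne_top (min_le_right _ _)
  have he0 : 0 < e := ENNReal.div_pos (by simp [hε.ne']) (by norm_num)
  have het : e ≠ ⊤ := ENNReal.div_ne_top hm1 (by norm_num)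
  have he4 : e + e + e + e ≤ ε := by
    have : e + e + e + e = e * 4 := by ring
    rw [this, he, ENNReal.div_mul_cancel (by norm_num) (by norm_num)]
    exact min_le_left _ _
  -- tails
  set ψ : ℕ → E → ℝ≥0∞ := fun n => {y : E | (n : ℝ) ≤ ‖y‖}.indicator
    (fun y => ENNReal.ofReal (‖y‖ ^ p)) with hψ
  have hψm : ∀ n, Measurable (ψ n) := fun n =>
    Measurable.indicator (by fun_prop) (measurableSet_le measurable_const measurable_norm)
  have hψlim : Tendsto (fun n => ∫⁻ y, ψ n y ∂ν) atTop (𝓝 0) := by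
    have := tendsto_lintegral_of_dominated_convergence (μ := ν) (F := ψ) (f := fun _ => 0)
      (fun y => ENNReal.ofReal (‖y‖ ^ p)) hψm
      (fun n => Eventually.of_forall fun y => indicator_le_self _ _ _) hν.ne
      (Eventually.of_forall fun y => by
        apply tendsto_const_nhds.congr'
        obtain ⟨N, hN⟩ := exists_nat_gt ‖y‖
        filter_upwards [eventually_ge_atTop N] with n hn
        have : ¬ ((n : ℝ) ≤ ‖y‖) := by
          have : (N : ℝ) ≤ n := by exact_mod_cast hn
          linarith
        simp [hψ, this])
    simpa using this
  set C : ℝ≥0∞ := ENNReal.ofReal (2 ^ p) with hC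
  have hψlim2 : Tendsto (fun n => (C + C) * ∫⁻ y, ψ n y ∂ν) atTop (𝓝 0) := by
    have := ENNReal.Tendsto.const_mul (a := C + C) hψlim (Or.inr (by simp [hC]))
    simpa using this
  obtain ⟨R, hR⟩ := ((ENNReal.tendsto_nhds_zero.mp hψlim2) e he0).exists
  -- small radius
  set r : ℝ := e.toReal ^ (1 / p) with hr
  have hr0 : 0 < r := Real.rpow_pos_of_pos (ENNReal.toReal_pos he0.ne' het) _
  have hre : ENNReal.ofReal (r ^ p) = e := by
    rw [hr, ← Real.rpow_mul ENNReal.toReal_nonneg, one_div_mul_cancel hp0.ne', Real.rpow_one,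
      ENNReal.ofReal_toReal het]
  set M : ℝ≥0∞ := ENNReal.ofReal ((2 * R) ^ p) with hM
  classical
  set u := TopologicalSpace.denseSeq E with hu
  set m : E → ℝ≥0∞ := fun x => ⨅ j, if ‖u j‖ < R ∧ r < ‖T x - u j‖ then F (x, u j) else ⊤ with hm
  have hmm : Measurable m := by
    refine Measurable.iInf fun j => Measurable.ite ?_ (by fun_prop) measurable_const
    have hTm : Measurable (fun x => ‖T x - u j‖) := by fun_prop
    exact (MeasurableSet.const _).inter (measurableSet_lt measurable_const hTm)
  have hmF : ∀ x y, ‖y‖ < R → r < ‖T x - y‖ → m x ≤ F (x, y) := by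
    intro x y hy1 hy2
    have hcT : Continuous (fun y : E => ‖T x - y‖) := by fun_prop
    have hU : IsOpen {y : E | ‖y‖ < R ∧ r < ‖T x - y‖} :=
      (isOpen_lt continuous_norm continuous_const).inter
        (isOpen_lt continuous_const hcT)
    have hcl : IsClosed {y : E | m x ≤ F (x, y)} := isClosed_le continuous_const (hFc x)
    have hsub := (TopologicalSpace.denseRange_denseSeq E).open_subset_closure_inter hU
    have hsub2 : ({y : E | ‖y‖ < R ∧ r < ‖T x - y‖} ∩ range (TopologicalSpace.denseSeq E)) ⊆
        {y : E | m x ≤ F (x, y)} := by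
      rintro _ ⟨hy, ⟨j, rfl⟩⟩
      have hy' : ‖u j‖ < R ∧ r < ‖T x - u j‖ := hy
      have := iInf_le (fun j => if ‖u j‖ < R ∧ r < ‖T x - u j‖ then F (x, u j) else ⊤) j
      rw [if_pos hy'] at this
      exact this
    exact (closure_minimal hsub2 hcl) (hsub ⟨hy1, hy2⟩)
  have hmpos : ∀ᵐ x ∂μ, 0 < m x := by
    filter_upwards [hFpos] with x hx
    set K : Set E := {y : E | ‖y‖ ≤ R ∧ r ≤ ‖T x - y‖} with hK
    have hcT : Continuous (fun y : E => ‖T x - y‖) := by fun_prop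
    have hKc : IsCompact K := by
      refine (isCompact_closedBall (0 : E) R).of_isClosed_subset ?_ ?_
      · exact (isClosed_le continuous_norm continuous_const).inter
          (isClosed_le continuous_const hcT)
      · intro y hy
        simpa using hy.1
    rcases K.eq_empty_or_nonempty with hK0 | hKn
    · have : m x = ⊤ := by
        rw [hm]
        simp only [iInf_eq_top]
        intro j
        rw [if_neg]
        rintro ⟨ha, hb⟩
        have : u j ∈ K := ⟨ha.le, hb.le⟩
        rw [hK0] at this
        exact this
      rw [this]; simp
    · obtain ⟨y₀, hy₀, hmin⟩ := hKc.exists_isMinOn hKn (hFc x).continuousOn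
      have hne : y₀ ≠ T x := by
        rintro rfl
        have : r ≤ ‖T x - T x‖ := hy₀.2
        simp at this
        linarith
      refine (hx y₀ hne).trans_le (le_iInf fun j => ?_)
      split_ifs with hj
      · exact hmin (show u j ∈ K from ⟨hj.1.le, hj.2.le⟩)
      · exact le_top
  have hsets : Tendsto (fun n : ℕ => μ {x | m x ≤ (n : ℝ≥0∞)⁻¹}) atTop (𝓝 0) := by
    have := tendsto_measure_iInter_atTop (μ := μ) (s := fun n : ℕ => {x | m x ≤ (n : ℝ≥0∞)⁻¹})
      (fun n => (measurableSet_le hmm measurable_const).nullMeasurableSet)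
      (fun a b hab x hx => by
        have hx' : m x ≤ (b : ℝ≥0∞)⁻¹ := hx
        have : (b : ℝ≥0∞)⁻¹ ≤ (a : ℝ≥0∞)⁻¹ := by
          rw [ENNReal.inv_le_inv]; exact_mod_cast hab
        exact hx'.trans this)
      ⟨0, measure_ne_top _ _⟩
    have h0 : μ (⋂ n : ℕ, {x | m x ≤ (n : ℝ≥0∞)⁻¹}) = 0 := by
      refine measure_mono_null ?_ (ae_iff.mp hmpos)
      intro x hx
      have hx' : ∀ n : ℕ, m x ≤ (n : ℝ≥0∞)⁻¹ := fun n => mem_iInter.mp hx n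
      have : m x ≤ 0 := ge_of_tendsto' ENNReal.tendsto_inv_nat_nhds_zero hx'
      exact not_lt.mpr this
    rwa [h0] at this
  have hsets2 : Tendsto (fun n : ℕ => M * μ {x | m x ≤ (n : ℝ≥0∞)⁻¹}) atTop (𝓝 0) := by
    have := ENNReal.Tendsto.const_mul (a := M) hsets (Or.inr (by simp [hM]))
    simpa using this
  obtain ⟨n, hn⟩ := ((ENNReal.tendsto_nhds_zero.mp hsets2) e he0).exists
  have hF2 : Tendsto (fun k => (M * n) * ∫⁻ q, F q ∂(σ k)) atTop (𝓝 0) := by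
    have := ENNReal.Tendsto.const_mul (a := M * n) hlim
      (Or.inr (ENNReal.mul_ne_top (by simp [hM]) (by simp)))
    simpa using this
  set B : Set E := {x | m x ≤ (n : ℝ≥0∞)⁻¹} with hB
  have hBm : MeasurableSet B := measurableSet_le hmm measurable_const
  have hpt : ∀ q : E × E, ENNReal.ofReal (‖T q.1 - q.2‖ ^ p) ≤
      e + (C * ψ R (T q.1) + C * ψ R q.2) + M * B.indicator 1 q.1 + (M * n) * F q := by
    rintro ⟨x, y⟩
    simp only
    have hnn : ‖T x - y‖ ≤ ‖T x‖ + ‖y‖ := norm_sub_le _ _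
    have hbig : ∀ z : E, (R : ℝ) ≤ ‖z‖ → ‖T x - y‖ ≤ 2 * ‖z‖ →
        ENNReal.ofReal (‖T x - y‖ ^ p) ≤ C * ψ R z := by
      intro z hz hz2
      have : ψ R z = ENNReal.ofReal (‖z‖ ^ p) := by simp [hψ, hz]
      rw [this, hC, ← ENNReal.ofReal_mul (by positivity), ← Real.mul_rpow (by norm_num) (norm_nonneg _)]
      apply ENNReal.ofReal_le_ofReal
      exact Real.rpow_le_rpow (norm_nonneg _) hz2 hp0.le
    by_cases hcase : (R : ℝ) ≤ ‖T x‖ ∨ (R : ℝ) ≤ ‖y‖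
    · have : ENNReal.ofReal (‖T x - y‖ ^ p) ≤ C * ψ R (T x) + C * ψ R y := by
        rcases le_total ‖y‖ ‖T x‖ with h | h
        · refine (hbig (T x) ?_ (by linarith)).trans le_self_add
          rcases hcase with h' | h' <;> linarith
        · refine (hbig y ?_ (by linarith)).trans le_add_self
          rcases hcase with h' | h' <;> linarith
      refine this.trans ?_
      rw [add_assoc, add_assoc]
      exact le_add_left (le_add_right le_rfl)
    · push Not at hcase
      by_cases hsm : ‖T x - y‖ ≤ r
      · have : ENNReal.ofReal (‖T x - y‖ ^ p) ≤ e := by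
          rw [← hre]
          exact ENNReal.ofReal_le_ofReal (Real.rpow_le_rpow (norm_nonneg _) hsm hp0.le)
        refine this.trans ?_
        rw [add_assoc, add_assoc]
        exact le_self_add
      · push Not at hsm
        have hGM : ENNReal.ofReal (‖T x - y‖ ^ p) ≤ M :=
          ENNReal.ofReal_le_ofReal (Real.rpow_le_rpow (norm_nonneg _) (by linarith) hp0.le)
        by_cases hxB : x ∈ B
        · have : B.indicator (1 : E → ℝ≥0∞) x = 1 := by simp [hxB]
          rw [this, mul_one, add_assoc, add_comm M, ← add_assoc]
          exact hGM.trans le_add_self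
        · have hlt : (n : ℝ≥0∞)⁻¹ < m x := not_le.mp hxB
          have hle := hlt.le.trans (hmF x y hcase.2 hsm)
          have hn0 : (n : ℝ≥0∞) ≠ 0 := by
            intro h0
            rw [h0, ENNReal.inv_zero] at hlt
            exact not_top_lt hlt
          have h1F : 1 ≤ (n : ℝ≥0∞) * F (x, y) := by
            rw [← ENNReal.mul_inv_cancel hn0 (by simp)]
            gcongr
          have : M ≤ M * n * F (x, y) := by
            rw [mul_assoc]
            calc M = M * 1 := (mul_one _).symm
              _ ≤ _ := by gcongr
          exact (hGM.trans this).trans le_add_self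
  filter_upwards [(ENNReal.tendsto_nhds_zero.mp hF2) e he0] with k hk
  have hprob : IsProbabilityMeasure (σ k) := tlp_isProb_of_map measurable_fst (h1 k)
  have hm1 : Measurable (fun q : E × E => C * ψ R (T q.1)) :=
    ((hψm R).comp (hT.comp measurable_fst)).const_mul _
  have hm2 : Measurable (fun q : E × E => C * ψ R q.2) :=
    ((hψm R).comp measurable_snd).const_mul _
  have hm3 : Measurable (fun q : E × E => M * B.indicator 1 q.1) :=
    ((measurable_one.indicator hBm).comp measurable_fst).const_mul _
  have hψT : Measurable (fun x => ψ R (T x)) := (hψm R).comp hT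
  have hψT1 : Measurable (fun q : E × E => ψ R (T q.1)) := hψT.comp measurable_fst
  have hψ2 : Measurable (fun q : E × E => ψ R q.2) := (hψm R).comp measurable_snd
  have hB1 : Measurable (fun q : E × E => B.indicator (1 : E → ℝ≥0∞) q.1) :=
    (measurable_one.indicator hBm).comp measurable_fst
  have i1 : ∫⁻ q, C * ψ R (T q.1) ∂(σ k) = C * ∫⁻ y, ψ R y ∂ν := by
    rw [← hTμ, lintegral_map (hψm R) hT, ← h1 k, lintegral_map hψT measurable_fst,
      lintegral_const_mul _ hψT1]
  have i2 : ∫⁻ q, C * ψ R q.2 ∂(σ k) = C * ∫⁻ y, ψ R y ∂ν := by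
    rw [← h2 k, lintegral_map (hψm R) measurable_snd, lintegral_const_mul _ hψ2]
  have i3 : ∫⁻ q, M * B.indicator 1 q.1 ∂(σ k) = M * μ B := by
    rw [← lintegral_indicator_one hBm, ← h1 k,
      lintegral_map (measurable_one.indicator hBm) measurable_fst, lintegral_const_mul _ hB1]
  have hm12 : Measurable (fun q : E × E => C * ψ R (T q.1) + C * ψ R q.2) := hm1.add hm2
  calc ∫⁻ q, ENNReal.ofReal (‖T q.1 - q.2‖ ^ p) ∂(σ k)
      ≤ ∫⁻ q, (e + (C * ψ R (T q.1) + C * ψ R q.2) + M * B.indicator 1 q.1 + (M * n) * F q) ∂(σ k) :=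
        lintegral_mono hpt
    _ = e + (C * ∫⁻ y, ψ R y ∂ν + C * ∫⁻ y, ψ R y ∂ν) + M * μ B + (M * n) * ∫⁻ q, F q ∂(σ k) := by
        rw [lintegral_add_right _ (hFm.const_mul _), lintegral_add_right _ hm3,
          lintegral_add_right _ hm12, lintegral_add_right _ hm2, i1, i2, i3,
          lintegral_const_mul _ hFm, lintegral_const, measure_univ, mul_one]
    _ ≤ e + e + e + e := by
        rw [← add_mul]
        gcongr
    _ ≤ ε := he4

end PartE
section PartF0
variable {E : Type*} [NormedAddCommGroup E] [InnerProductSpace ℝ E] [FiniteDimensional ℝ E]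
  [MeasurableSpace E] [BorelSpace E]

lemma tlp_F {p : ℝ} (hp : 1 < p) (μ : Measure E)
    [IsProbabilityMeasure μ] (hμ : μ ≪ volume) (T : E → E) (hT : Measurable T) :
    ∃ F : E × E → ℝ≥0∞, Measurable F ∧ (∀ x, Continuous (fun y => F (x, y))) ∧
      (∀ᵐ x ∂μ, ∀ y, y ≠ T x → 0 < F (x, y)) ∧
      ∀ q : E × E, F q ≤ ∫⁻ x', ENNReal.ofReal (‖q.1 - q.2‖ ^ p + ‖x' - T x'‖ ^ p
        - ‖q.1 - T x'‖ ^ p - ‖x' - q.2‖ ^ p) ∂μ := by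
  have hp0 : 0 ≤ p := by linarith
  obtain ⟨D, hD⟩ : ∃ D : E × E → E → ℝ, ∀ q x', D q x' = ‖q.1 - q.2‖ ^ p + ‖x' - T x'‖ ^ p
      - ‖q.1 - T x'‖ ^ p - ‖x' - q.2‖ ^ p := ⟨_, fun _ _ => rfl⟩
  have hDm : Measurable (fun z : (E × E) × E => D z.1 z.2) := by
    simp only [hD]
    fun_prop
  simp only [← hD]
  have hDm1 : Measurable (fun z : (E × E) × E => ENNReal.ofReal (D z.1 z.2)) := hDm.ennreal_ofReal
  set F : E × E → ℝ≥0∞ :=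
    fun q => ∫⁻ x', min 1 (ENNReal.ofReal (D q x')) ∂μ with hF
  have hmin : Measurable (fun z : (E × E) ×
      E => min 1 (ENNReal.ofReal (D z.1 z.2))) :=
    measurable_const.min hDm1
  have hmin' : ∀ q : E × E,
      Measurable (fun x' => min 1 (ENNReal.ofReal (D q x'))) := fun q =>
    hmin.comp (measurable_prodMk_left (x := q))
  have hFm : Measurable F := hmin.lintegral_prod_right'
  have hFc : ∀ x, Continuous (fun y => F (x, y)) := by
    intro x
    rw [continuous_iff_continuousAt]
    intro y
    refine tendsto_lintegral_filter_of_dominated_convergence (fun _ => 1)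
      (Eventually.of_forall fun y' => hmin' (x, y'))
      (Eventually.of_forall fun y' => Eventually.of_forall fun x' => min_le_left _ _)
      (by simp) (Eventually.of_forall fun x' => ?_)
    have hc : Continuous (fun y => min 1 (ENNReal.ofReal (D (x, y) x'))) := by
      refine continuous_const.min (ENNReal.continuous_ofReal.comp ?_)
      simp only [hD]
      have e1 : Continuous (fun y : E => ‖x - y‖ ^ p) :=
        (by fun_prop : Continuous fun y : E => ‖x - y‖).rpow_const
          (fun _ => Or.inr hp0)
      have e2 : Continuous (fun y : E => ‖x' - y‖ ^ p) :=
        (by fun_prop : Continuous fun y : E => ‖x' - y‖).rpow_const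
          (fun _ => Or.inr hp0)
      exact ((e1.add continuous_const).sub continuous_const).sub e2
    exact hc.tendsto y
  have hFpos : ∀ᵐ x ∂μ, ∀ y, y ≠ T x → 0 < F (x, y) := by
    filter_upwards [tlp_ae_pos hp μ hμ T hT] with x hx y hy
    rw [hF, lintegral_pos_iff_support (hmin' (x, y))]
    refine (hx y hy).trans_le (measure_mono ?_)
    intro x' hx'
    have hx' : 0 < D (x, y) x' := by rw [hD]; exact hx'
    simp [hx']
  exact ⟨F, hFm, hFc, hFpos, fun q => lintegral_mono fun x' => min_le_right _ _⟩

end PartF0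

section PartF

set_option maxHeartbeats 400000 in
lemma tlp_key {d : ℕ} {p : ℝ} (hp : 1 < p) (μ ν : Measure (EuclideanSpace ℝ (Fin d)))
    [IsProbabilityMeasure μ] [IsProbabilityMeasure ν] (hμ : μ ≪ volume)
    (T : EuclideanSpace ℝ (Fin d) → EuclideanSpace ℝ (Fin d)) (hT : Measurable T)
    (hTμ : μ.map T = ν) (hν : (∫⁻ y, ENNReal.ofReal (‖y‖ ^ p) ∂ν) < ⊤)
    (hopt : (∫⁻ x, ENNReal.ofReal (‖x - T x‖ ^ p) ∂μ) = WpCost p μ ν)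
    (hfin : WpCost p μ ν ≠ ⊤)
    (σ : ℕ → Measure (EuclideanSpace ℝ (Fin d) × EuclideanSpace ℝ (Fin d)))
    (h1 : ∀ k, (σ k).map Prod.fst = μ) (h2 : ∀ k, (σ k).map Prod.snd = ν)
    (u : ℕ → ℝ≥0∞) (hu : ∀ k, ∫⁻ q, ENNReal.ofReal (‖q.1 - q.2‖ ^ p) ∂(σ k) ≤ u k)
    (hlim : Tendsto u atTop (𝓝 (WpCost p μ ν))) :
    Tendsto (fun k => ∫⁻ q, ENNReal.ofReal (‖T q.1 - q.2‖ ^ p) ∂(σ k)) atTop (𝓝 0) := by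
  have hp0 : 0 ≤ p := by linarith
  obtain ⟨F, hFm, hFc, hFpos, hFle⟩ := tlp_F hp μ hμ T hT
  refine tlp_conv hp μ ν T hT hTμ hν F hFm hFc hFpos σ h1 h2 ?_
  -- the bound
  set γ := μ.map (fun x => (x, T x)) with hγ
  have hgm : Measurable (fun x => (x, T x)) := by fun_prop
  have hγp : IsProbabilityMeasure γ := Measure.isProbabilityMeasure_map hgm.aemeasurable
  have hγ1 : γ.map Prod.fst = μ := by
    rw [hγ, Measure.map_map measurable_fst hgm]
    exact Measure.map_id
  have hγ2 : γ.map Prod.snd = ν := by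
    rw [hγ, Measure.map_map measurable_snd hgm]
    exact hTμ
  set W := WpCost p μ ν with hW
  have hγc : ∫⁻ q, ENNReal.ofReal (‖q.1 - q.2‖ ^ p) ∂γ = W := by
    rw [hγ, lintegral_map (by fun_prop) hgm]
    exact hopt
  have hbound : ∀ k, ∫⁻ q, F q ∂(σ k) ≤ 4 * (u k - W) := by
    intro k
    have hσp : IsProbabilityMeasure (σ k) := tlp_isProb_of_map measurable_fst (h1 k)
    set π := (2⁻¹ : ℝ≥0∞) • (σ k + γ) with hπ
    have hhalf : ∀ m : Measure (EuclideanSpace ℝ (Fin d)), (2⁻¹ : ℝ≥0∞) • (m + m) = m := by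
      intro m
      rw [← two_smul ℝ≥0∞ m, smul_smul, ENNReal.inv_mul_cancel (by norm_num) (by norm_num), one_smul]
    have hπ1 : π.map Prod.fst = μ := by
      rw [hπ, Measure.map_smul, Measure.map_add _ _ measurable_fst, h1 k, hγ1, hhalf]
    have hπ2 : π.map Prod.snd = ν := by
      rw [hπ, Measure.map_smul, Measure.map_add _ _ measurable_snd, h2 k, hγ2, hhalf]
    have hπp : IsProbabilityMeasure π := tlp_isProb_of_map measurable_fst hπ1
    have hsw := tlp_swap hp μ ν π hπ1 hπ2
    set G : (EuclideanSpace ℝ (Fin d) × EuclideanSpace ℝ (Fin d)) ×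
        (EuclideanSpace ℝ (Fin d) × EuclideanSpace ℝ (Fin d)) → ℝ≥0∞ := fun z =>
      ENNReal.ofReal (‖z.1.1 - z.1.2‖ ^ p + ‖z.2.1 - z.2.2‖ ^ p
        - ‖z.1.1 - z.2.2‖ ^ p - ‖z.2.1 - z.1.2‖ ^ p) with hG
    have hGm : Measurable G := by simp only [hG]; fun_prop
    have hFG : ∫⁻ q, F q ∂(σ k) ≤ ∫⁻ q, ∫⁻ q', G (q, q') ∂γ ∂(σ k) := by
      refine lintegral_mono fun q => ?_
      have hGq : Measurable (fun q' => G (q, q')) := hGm.comp measurable_prodMk_left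
      rw [hγ, lintegral_map hGq hgm]
      exact hFle q
    have hlow : 2⁻¹ * (2⁻¹ * ∫⁻ q, ∫⁻ q', G (q, q') ∂γ ∂(σ k)) ≤ ∫⁻ z, G z ∂(π.prod π) := by
      rw [lintegral_prod _ hGm.aemeasurable]
      have e1 : ∀ q, 2⁻¹ * ∫⁻ q', G (q, q') ∂γ ≤ ∫⁻ q', G (q, q') ∂π := by
        intro q
        rw [hπ, lintegral_smul_measure, lintegral_add_measure, smul_eq_mul]
        gcongr
        exact le_add_self
      calc 2⁻¹ * (2⁻¹ * ∫⁻ q, ∫⁻ q', G (q, q') ∂γ ∂(σ k))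
          = 2⁻¹ * ∫⁻ q, 2⁻¹ * ∫⁻ q', G (q, q') ∂γ ∂(σ k) := by
            rw [lintegral_const_mul _ hGm.lintegral_prod_right']
        _ ≤ 2⁻¹ * ∫⁻ q, ∫⁻ q', G (q, q') ∂π ∂(σ k) := by
            gcongr with q
            exact e1 q
        _ ≤ ∫⁻ q, ∫⁻ q', G (q, q') ∂π ∂π := by
            conv_rhs => rw [hπ, lintegral_smul_measure, lintegral_add_measure, smul_eq_mul]
            gcongr
            exact le_self_add
    have hcost : 2 * ∫⁻ q, ENNReal.ofReal (‖q.1 - q.2‖ ^ p) ∂π =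
        ∫⁻ q, ENNReal.ofReal (‖q.1 - q.2‖ ^ p) ∂(σ k) + W := by
      rw [hπ, lintegral_smul_measure, lintegral_add_measure, hγc, smul_eq_mul, ← mul_assoc,
        ENNReal.mul_inv_cancel (by norm_num) (by norm_num), one_mul]
    rw [hcost] at hsw
    have h3 : 2⁻¹ * (2⁻¹ * ∫⁻ q, F q ∂(σ k)) + W + W ≤ u k + W := by
      calc 2⁻¹ * (2⁻¹ * ∫⁻ q, F q ∂(σ k)) + W + W
          = 2⁻¹ * (2⁻¹ * ∫⁻ q, F q ∂(σ k)) + 2 * W := by ring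
        _ ≤ ∫⁻ z, G z ∂(π.prod π) + 2 * W := by
            gcongr
            refine le_trans ?_ hlow
            gcongr
        _ ≤ ∫⁻ q, ENNReal.ofReal (‖q.1 - q.2‖ ^ p) ∂(σ k) + W := hsw
        _ ≤ u k + W := by gcongr; exact hu k
    have h4 : 2⁻¹ * (2⁻¹ * ∫⁻ q, F q ∂(σ k)) + W ≤ u k := (ENNReal.add_le_add_iff_right hfin).mp h3
    have h5 : 2⁻¹ * (2⁻¹ * ∫⁻ q, F q ∂(σ k)) ≤ u k - W := ENNReal.le_sub_of_add_le_right hfin h4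
    calc ∫⁻ q, F q ∂(σ k) = (2 * 2⁻¹) * ((2 * 2⁻¹) * ∫⁻ q, F q ∂(σ k)) := by
          rw [ENNReal.mul_inv_cancel (by norm_num) (by norm_num), one_mul, one_mul]
      _ = 4 * (2⁻¹ * (2⁻¹ * ∫⁻ q, F q ∂(σ k))) := by ring
      _ ≤ 4 * (u k - W) := by gcongr
  have hz : Tendsto (fun k => 4 * (u k - W)) atTop (𝓝 0) := by
    have e1 : Tendsto (fun k => u k - W) atTop (𝓝 (W - W)) :=
      ENNReal.Tendsto.sub hlim tendsto_const_nhds (Or.inl hfin)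
    have := ENNReal.Tendsto.const_mul (a := 4) e1 (Or.inr (by norm_num))
    simpa using this
  exact tendsto_of_tendsto_of_tendsto_of_le_of_le tendsto_const_nhds hz (fun _ => zero_le) hbound

end PartF
section PartG

/-- the `L^p(P)` distance between two maps -/
noncomputable def tlpN {Ω E : Type*} [MeasurableSpace Ω] [NormedAddCommGroup E]
    (p : ℝ) (P : Measure Ω) (f g : Ω → E) : ℝ≥0∞ :=
  (∫⁻ ω, ENNReal.ofReal (‖f ω - g ω‖ ^ p) ∂P) ^ (1 / p)

variable {Ω E : Type*} [MeasurableSpace Ω] [NormedAddCommGroup E]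
  [MeasurableSpace E] [BorelSpace E] [SecondCountableTopology E]

lemma tlpN_eq {p : ℝ} (hp : 1 < p) (P : Measure Ω) (f g : Ω → E) :
    tlpN p P f g = eLpNorm (f - g) (ENNReal.ofReal p) P := by
  have hp0 : 0 < p := by linarith
  rw [eLpNorm_eq_lintegral_rpow_enorm_toReal (by simp [hp0]) (by simp), tlpN,
    ENNReal.toReal_ofReal hp0.le]
  congr 1
  refine lintegral_congr fun ω => ?_
  rw [← ENNReal.ofReal_rpow_of_nonneg (norm_nonneg _) hp0.le, ofReal_norm, Pi.sub_apply]

lemma tlpN_tri {p : ℝ} (hp : 1 < p) (P : Measure Ω) {f g h : Ω → E} (hf : Measurable f)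
    (hg : Measurable g) (hh : Measurable h) : tlpN p P f h ≤ tlpN p P f g + tlpN p P g h := by
  rw [tlpN_eq hp, tlpN_eq hp, tlpN_eq hp]
  have : f - h = (f - g) + (g - h) := by abel
  rw [this]
  exact eLpNorm_add_le (hf.sub hg).aestronglyMeasurable (hg.sub hh).aestronglyMeasurable
    (by rw [← ENNReal.ofReal_one]; exact ENNReal.ofReal_le_ofReal hp.le)

lemma tlpN_tri4 {p : ℝ} (hp : 1 < p) (P : Measure Ω) {f g h l : Ω → E} (hf : Measurable f)
    (hg : Measurable g) (hh : Measurable h) (hl : Measurable l) :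
    tlpN p P f l ≤ tlpN p P f g + tlpN p P g h + tlpN p P h l :=
  (tlpN_tri hp P hf hh hl).trans (add_le_add_left (tlpN_tri hp P hf hg hh) _)

lemma tlpN_comm (p : ℝ) (P : Measure Ω) (f g : Ω → E) : tlpN p P f g = tlpN p P g f := by
  simp only [tlpN, norm_sub_rev]

lemma tlpN_map {Ω' : Type*} [MeasurableSpace Ω'] (p : ℝ) (P : Measure Ω) {φ : Ω → Ω'}
    {f g : Ω' → E} (hφ : Measurable φ) (hf : Measurable f) (hg : Measurable g) :
    tlpN p (P.map φ) f g = tlpN p P (fun ω => f (φ ω)) (fun ω => g (φ ω)) := by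
  simp only [tlpN]
  rw [lintegral_map (by fun_prop) hφ]

lemma tlpN_rpow {p : ℝ} (hp : 1 < p) (P : Measure Ω) (f g : Ω → E) :
    tlpN p P f g ^ p = ∫⁻ ω, ENNReal.ofReal (‖f ω - g ω‖ ^ p) ∂P := by
  rw [tlpN, ← ENNReal.rpow_mul, one_div_mul_cancel (by linarith), ENNReal.rpow_one]

end PartG

section PartH

lemma tlp_exists {d : ℕ} (p : ℝ) (μ ν : Measure (EuclideanSpace ℝ (Fin d)))
    [IsProbabilityMeasure μ] [IsProbabilityMeasure ν] (ε : ℝ≥0∞) (hε : ε ≠ 0) :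
    ∃ π : Measure (EuclideanSpace ℝ (Fin d) × EuclideanSpace ℝ (Fin d)),
      π.map Prod.fst = μ ∧ π.map Prod.snd = ν ∧
      ∫⁻ q, ENNReal.ofReal (‖q.1 - q.2‖ ^ p) ∂π ≤ WpCost p μ ν + ε := by
  by_cases h : WpCost p μ ν = ⊤
  · refine ⟨μ.prod ν, by simp [Measure.map_fst_prod], by simp [Measure.map_snd_prod], ?_⟩
    rw [h]; simp
  · have : WpCost p μ ν < WpCost p μ ν + ε := ENNReal.lt_add_right h hε
    obtain ⟨C, ⟨π, h1, h2, rfl⟩, hC⟩ := sInf_lt_iff.mp this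
    exact ⟨π, h1, h2, hC.le⟩

lemma tlp_le {d : ℕ} {p : ℝ} (hp : 1 < p) (μ ν : Measure (EuclideanSpace ℝ (Fin d)))
    (π : Measure (EuclideanSpace ℝ (Fin d) × EuclideanSpace ℝ (Fin d)))
    (h1 : π.map Prod.fst = μ) (h2 : π.map Prod.snd = ν) :
    WpCost p μ ν ^ (1 / p) ≤ tlpN p π Prod.fst Prod.snd := by
  rw [tlpN]
  apply ENNReal.rpow_le_rpow
  · exact sInf_le ⟨π, h1, h2, rfl⟩
  · positivity

/-- one gluing step: `θ` couples `m₁` and `m₂`, `S` pushes `m₂` to `n₁`, `η` couples `n₁, n₂` -/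
lemma tlp_step {d : ℕ} {p : ℝ} (hp : 1 < p) (m₁ m₂ n₁ n₂ : Measure (EuclideanSpace ℝ (Fin d)))
    [IsProbabilityMeasure m₁] [IsProbabilityMeasure n₁]
    (S : EuclideanSpace ℝ (Fin d) → EuclideanSpace ℝ (Fin d)) (hS : Measurable S)
    (hSm : m₂.map S = n₁)
    (θ η : Measure (EuclideanSpace ℝ (Fin d) × EuclideanSpace ℝ (Fin d)))
    (hθ1 : θ.map Prod.fst = m₁) (hθ2 : θ.map Prod.snd = m₂)
    (hη1 : η.map Prod.fst = n₁) (hη2 : η.map Prod.snd = n₂) :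
    ∃ σ : Measure (EuclideanSpace ℝ (Fin d) × EuclideanSpace ℝ (Fin d)),
      σ.map Prod.fst = m₁ ∧ σ.map Prod.snd = n₂ ∧
      tlpN p σ Prod.fst Prod.snd ≤ tlpN p θ Prod.fst Prod.snd + tlpN p m₂ id S +
        tlpN p η Prod.fst Prod.snd ∧
      ∀ U : EuclideanSpace ℝ (Fin d) → EuclideanSpace ℝ (Fin d), Measurable U →
        tlpN p θ (fun q => U q.1) (fun q => S q.2) ≤
          tlpN p σ (fun q => U q.1) Prod.snd + tlpN p η Prod.fst Prod.snd := by
  have hθp : IsProbabilityMeasure θ := tlp_isProb_of_map measurable_fst hθ1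
  have hηp : IsProbabilityMeasure η := tlp_isProb_of_map measurable_fst hη1
  have hS2 : Measurable (fun q : EuclideanSpace ℝ (Fin d) × EuclideanSpace ℝ (Fin d) => S q.2) :=
    hS.comp measurable_snd
  obtain ⟨P, hP1, hP2⟩ := tlp_glue θ (fun q => S q.2) hS2 η (by
    rw [hη1, ← hSm, ← hθ2, Measure.map_map hS measurable_snd]; rfl)
  have hφ : Measurable (fun q : (EuclideanSpace ℝ (Fin d) × EuclideanSpace ℝ (Fin d)) ×
      EuclideanSpace ℝ (Fin d) => (q.1.1, q.2)) := by fun_prop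
  have hφ2 : Measurable (fun q : (EuclideanSpace ℝ (Fin d) × EuclideanSpace ℝ (Fin d)) ×
      EuclideanSpace ℝ (Fin d) => (S q.1.2, q.2)) := by fun_prop
  have hm11 : Measurable (fun q : (EuclideanSpace ℝ (Fin d) × EuclideanSpace ℝ (Fin d)) ×
      EuclideanSpace ℝ (Fin d) => q.1.1) := by fun_prop
  have hm12 : Measurable (fun q : (EuclideanSpace ℝ (Fin d) × EuclideanSpace ℝ (Fin d)) ×
      EuclideanSpace ℝ (Fin d) => q.1.2) := by fun_prop
  have hmS : Measurable (fun q : (EuclideanSpace ℝ (Fin d) × EuclideanSpace ℝ (Fin d)) ×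
      EuclideanSpace ℝ (Fin d) => S q.1.2) := by fun_prop
  have eη : tlpN p η Prod.fst Prod.snd = tlpN p P (fun q => S q.1.2) (fun q => q.2) := by
    rw [← hP2, tlpN_map p P hφ2 measurable_fst measurable_snd]
  refine ⟨P.map (fun q => (q.1.1, q.2)), ?_, ?_, ?_, ?_⟩
  · rw [Measure.map_map measurable_fst hφ, ← hθ1, ← hP1, Measure.map_map measurable_fst measurable_fst]
    rfl
  · rw [Measure.map_map measurable_snd hφ, ← hη2, ← hP2, Measure.map_map measurable_snd hφ2]
    rfl
  · rw [tlpN_map p P hφ measurable_fst measurable_snd, eη, ← hθ2, ← hP1,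
      tlpN_map p P measurable_fst measurable_fst measurable_snd,
      tlpN_map p _ measurable_snd measurable_id hS,
      tlpN_map p P (f := fun q => id q.2) measurable_fst measurable_snd hS2]
    exact tlpN_tri4 hp P hm11 hm12 hmS measurable_snd
  · intro U hU
    have hU1 : Measurable (fun q : EuclideanSpace ℝ (Fin d) × EuclideanSpace ℝ (Fin d) => U q.1) :=
      hU.comp measurable_fst
    rw [tlpN_map p P hφ hU1 measurable_snd, eη, ← hP1, tlpN_map p P measurable_fst hU1 hS2,
      tlpN_comm p P (fun q => S q.1.2)]
    exact tlpN_tri hp P (hU.comp hm11) measurable_snd hmS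

end PartH

/-- Stability of optimal transport maps in the `TL^p` sense: if
`μ_k → μ` and `ν_k → ν` in `L^p`-Wasserstein distance, `μ_k, μ` absolutely continuous,
and `T_k, T` are the optimal transport maps, then
`d_{TL^p}((μ_k, T_k), (μ, T)) → 0`, i.e. the infimum over couplings `θ` of `μ` and `μ_k`
of `∫ (|x−y|^p + |T(x) − T_k(y)|^p) dθ` tends to `0`. -/
theorem optimal_map_TLp_stability
    (d : ℕ) (p : ℝ) (hp : 1 < p)
    (μ : ℕ → Measure (EuclideanSpace ℝ (Fin d))) (μl : Measure (EuclideanSpace ℝ (Fin d)))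
    (ν : ℕ → Measure (EuclideanSpace ℝ (Fin d))) (νl : Measure (EuclideanSpace ℝ (Fin d)))
    (hμprob : ∀ k, IsProbabilityMeasure (μ k)) (hμlprob : IsProbabilityMeasure μl)
    (hνprob : ∀ k, IsProbabilityMeasure (ν k)) (hνlprob : IsProbabilityMeasure νl)
    (hμac : ∀ k, μ k ≪ volume) (hμlac : μl ≪ volume)
    (hμmom : ∀ k, (∫⁻ x, ENNReal.ofReal (‖x‖ ^ p) ∂(μ k)) < ⊤)
    (hμlmom : (∫⁻ x, ENNReal.ofReal (‖x‖ ^ p) ∂μl) < ⊤)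
    (hνmom : ∀ k, (∫⁻ x, ENNReal.ofReal (‖x‖ ^ p) ∂(ν k)) < ⊤)
    (hνlmom : (∫⁻ x, ENNReal.ofReal (‖x‖ ^ p) ∂νl) < ⊤)
    (hμconv : Tendsto (fun k => WpCost p (μ k) μl) atTop (𝓝 0))
    (hνconv : Tendsto (fun k => WpCost p (ν k) νl) atTop (𝓝 0))
    (T : ℕ → EuclideanSpace ℝ (Fin d) → EuclideanSpace ℝ (Fin d))
    (Tl : EuclideanSpace ℝ (Fin d) → EuclideanSpace ℝ (Fin d))
    (hTmeas : ∀ k, Measurable (T k)) (hTlmeas : Measurable Tl)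
    (hTpush : ∀ k, (μ k).map (T k) = ν k) (hTlpush : μl.map Tl = νl)
    (hTopt : ∀ k, (∫⁻ x, ENNReal.ofReal (‖x - T k x‖ ^ p) ∂(μ k)) = WpCost p (μ k) (ν k))
    (hTlopt : (∫⁻ x, ENNReal.ofReal (‖x - Tl x‖ ^ p) ∂μl) = WpCost p μl νl) :
    Tendsto (fun k =>
      sInf { C | ∃ θ : Measure (EuclideanSpace ℝ (Fin d) × EuclideanSpace ℝ (Fin d)),
        θ.map Prod.fst = μl ∧ θ.map Prod.snd = μ k ∧
        C = ∫⁻ q, ENNReal.ofReal (‖q.1 - q.2‖ ^ p + ‖Tl q.1 - T k q.2‖ ^ p) ∂θ })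
      atTop (𝓝 0) := by

  have hp0 : 0 < p := by linarith
  have hip : 0 < 1 / p := by positivity
  -- near optimal couplings
  have hεk : ∀ k : ℕ, ((k : ℝ≥0∞))⁻¹ ≠ 0 := fun k => by simp
  choose θ hθ1 hθ2 hθc using fun k => tlp_exists p (μ k) μl _ (hεk k)
  choose η hη1 hη2 hηc using fun k => tlp_exists p (ν k) νl _ (hεk k)
  have hswap : ∀ (π : Measure (EuclideanSpace ℝ (Fin d) × EuclideanSpace ℝ (Fin d))),
      tlpN p (π.map Prod.swap) Prod.fst Prod.snd = tlpN p π Prod.fst Prod.snd := by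
    intro π
    rw [tlpN_map p π measurable_swap measurable_fst measurable_snd, tlpN_comm]
    rfl
  have hsw1 : ∀ (π : Measure (EuclideanSpace ℝ (Fin d) × EuclideanSpace ℝ (Fin d))),
      (π.map Prod.swap).map Prod.fst = π.map Prod.snd := by
    intro π
    rw [Measure.map_map measurable_fst measurable_swap]; rfl
  have hsw2 : ∀ (π : Measure (EuclideanSpace ℝ (Fin d) × EuclideanSpace ℝ (Fin d))),
      (π.map Prod.swap).map Prod.snd = π.map Prod.fst := by
    intro π
    rw [Measure.map_map measurable_snd measurable_swap]; rfl
  obtain ⟨α, hα⟩ : ∃ α : ℕ → ℝ≥0∞, ∀ k, α k = tlpN p (θ k) Prod.fst Prod.snd := ⟨_, fun _ => rfl⟩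
  obtain ⟨β, hβ⟩ : ∃ β : ℕ → ℝ≥0∞, ∀ k, β k = tlpN p (η k) Prod.fst Prod.snd := ⟨_, fun _ => rfl⟩
  have hgen : ∀ (c : ℕ → ℝ≥0∞), Tendsto c atTop (𝓝 0) →
      Tendsto (fun k => (c k + ((k : ℝ≥0∞))⁻¹) ^ (1 / p)) atTop (𝓝 0) := by
    intro c hc
    have h1 := hc.add ENNReal.tendsto_inv_nat_nhds_zero
    have h2 := h1.ennrpow_const (1 / p)
    rwa [add_zero, ENNReal.zero_rpow_of_pos hip] at h2
  have hαlim : Tendsto α atTop (𝓝 0) := by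
    refine tendsto_of_tendsto_of_tendsto_of_le_of_le tendsto_const_nhds (hgen _ hμconv)
      (fun _ => zero_le) (fun k => ?_)
    rw [hα, tlpN]
    exact ENNReal.rpow_le_rpow (hθc k) hip.le
  have hβlim : Tendsto β atTop (𝓝 0) := by
    refine tendsto_of_tendsto_of_tendsto_of_le_of_le tendsto_const_nhds (hgen _ hνconv)
      (fun _ => zero_le) (fun k => ?_)
    rw [hβ, tlpN]
    exact ENNReal.rpow_le_rpow (hηc k) hip.le
  obtain ⟨w, hw⟩ : ∃ w, w = tlpN p μl id Tl := ⟨_, rfl⟩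
  have hwW : w ^ p = WpCost p μl νl := by
    rw [hw, tlpN_rpow hp, ← hTlopt]; rfl
  have hwtop : w ≠ ⊤ := by
    have h1 : tlpN p μl id (fun _ => 0) ≠ ⊤ := by
      rw [tlpN]
      apply ENNReal.rpow_ne_top_of_nonneg hip.le
      simpa using hμlmom.ne
    have h2 : tlpN p μl (fun _ => 0) Tl ≠ ⊤ := by
      rw [tlpN_comm, tlpN]
      apply ENNReal.rpow_ne_top_of_nonneg hip.le
      have : ∫⁻ x, ENNReal.ofReal (‖Tl x‖ ^ p) ∂μl ≠ ⊤ := by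
        rw [← hTlpush, lintegral_map (by fun_prop) hTlmeas] at hνlmom
        exact hνlmom.ne
      simpa using this
    rw [hw]
    exact ne_top_of_le_ne_top (ENNReal.add_ne_top.mpr ⟨h1, h2⟩)
      (tlpN_tri hp μl measurable_id measurable_const hTlmeas)
  have hfin : WpCost p μl νl ≠ ⊤ := by
    rw [← hwW]; exact ENNReal.rpow_ne_top_of_nonneg hp0.le hwtop
  -- first gluing: bound for the optimal cost along the sequence
  have hwk : ∀ k, tlpN p (μ k) id (T k) ≤ α k + w + β k := by
    intro k
    obtain ⟨σ, hσ1, hσ2, hσ3, -⟩ := tlp_step hp (μ k) μl νl (ν k) Tl hTlmeas hTlpush (θ k)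
      ((η k).map Prod.swap) (hθ1 k) (hθ2 k) (by rw [hsw1, hη2]) (by rw [hsw2, hη1])
    have h1 := tlp_le hp (μ k) (ν k) σ hσ1 hσ2
    rw [← hTopt k] at h1
    rw [hswap, ← hα, ← hβ, ← hw] at hσ3
    exact h1.trans hσ3
  -- second gluing
  have hstep := fun k => tlp_step hp μl (μ k) (ν k) νl (T k) (hTmeas k) (hTpush k)
    ((θ k).map Prod.swap) (η k) (by rw [hsw1, hθ2]) (by rw [hsw2, hθ1]) (hη1 k) (hη2 k)
  choose σ hσ1 hσ2 hσ3 hσ4 using hstep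
  have hσc : ∀ k, ∫⁻ q, ENNReal.ofReal (‖q.1 - q.2‖ ^ p) ∂(σ k) ≤
      (α k + (α k + w + β k) + β k) ^ p := by
    intro k
    rw [← tlpN_rpow hp (σ k) Prod.fst Prod.snd]
    refine ENNReal.rpow_le_rpow ?_ hp0.le
    have h3 := hσ3 k
    rw [hswap, ← hα, ← hβ] at h3
    refine h3.trans ?_
    gcongr
    exact hwk k
  have hulim : Tendsto (fun k => (α k + (α k + w + β k) + β k) ^ p) atTop (𝓝 (WpCost p μl νl)) := by
    have h1 := ((hαlim.add ((hαlim.add (tendsto_const_nhds (x := w))).add hβlim)).add hβlim).ennrpow_const p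
    simpa [hwW] using h1
  have hkey := tlp_key hp μl νl hμlac Tl hTlmeas hTlpush hνlmom hTlopt hfin σ hσ1 hσ2 _ hσc hulim
  have hδlim : Tendsto (fun k => tlpN p (σ k) (fun q => Tl q.1) Prod.snd) atTop (𝓝 0) := by
    have h2 := hkey.ennrpow_const (1 / p)
    rwa [ENNReal.zero_rpow_of_pos hip] at h2
  have hfinal : Tendsto (fun k => α k ^ p +
      (tlpN p (σ k) (fun q => Tl q.1) Prod.snd + β k) ^ p) atTop (𝓝 0) := by
    have h1 := (hαlim.ennrpow_const p).add ((hδlim.add hβlim).ennrpow_const p)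
    simpa [ENNReal.zero_rpow_of_pos hp0] using h1
  refine tendsto_of_tendsto_of_tendsto_of_le_of_le tendsto_const_nhds hfinal
    (fun _ => zero_le) (fun k => ?_)
  refine le_trans (b := ∫⁻ q, ENNReal.ofReal (‖q.1 - q.2‖ ^ p + ‖Tl q.1 - T k q.2‖ ^ p)
    ∂((θ k).map Prod.swap)) (sInf_le ⟨(θ k).map Prod.swap, by rw [hsw1, hθ2],
      by rw [hsw2, hθ1], rfl⟩) ?_
  have hsplit : ∀ q : EuclideanSpace ℝ (Fin d) × EuclideanSpace ℝ (Fin d),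
      ENNReal.ofReal (‖q.1 - q.2‖ ^ p + ‖Tl q.1 - T k q.2‖ ^ p) =
      ENNReal.ofReal (‖q.1 - q.2‖ ^ p) + ENNReal.ofReal (‖Tl q.1 - T k q.2‖ ^ p) := fun q =>
    ENNReal.ofReal_add (by positivity) (by positivity)
  rw [lintegral_congr hsplit, lintegral_add_left (by fun_prop)]
  refine add_le_add ?_ ?_
  · rw [← tlpN_rpow hp _ Prod.fst Prod.snd, hswap, ← hα]
  · rw [← tlpN_rpow hp ((θ k).map Prod.swap) (fun q => Tl q.1) (fun q => T k q.2), hβ]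
    exact ENNReal.rpow_le_rpow (hσ4 k Tl hTlmeas) hp0.le
end

section
/- Let μ_k (k ∈ ℕ) and μ be Borel probability measures on ℝ^d, absolutely continuous with respect to Lebesgue measure, and ν_k, ν Borel probability measures on ℝ^d, all with finite second moments, such that d_2(μ_k, μ) → 0 and d_2(ν_k, ν) → 0. Let T_k, T be Borel maps with (T_k)_# μ_k = ν_k and T_# μ = ν whose induced couplings (id × T_k)_# μ_k and (id × T)_# μ are optimal for the quadratic cost. For t ∈ [0,1] set T_{k,t} = (1−t)·id + t·T_k and T_t = (1−t)·id + t·T, and let μ_{k,t} = (T_{k,t})_# μ_k, μ_t = (T_t)_# μ be the displacement interpolations. Then: (i) sup_{t∈[0,1]} d_2(μ_{k,t}, μ_t) → 0 as k → ∞; and (ii) there exist couplings θ_k of μ and μ_k such that sup_{t∈[0,1]} ∫ ( |T_t(x) − T_{k,t}(y)|² + |(T(x) − x) − (T_k(y) − y)|² ) dθ_k(x,y) → 0 as k → ∞. -/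
open Set MeasureTheory Filter
open scoped ENNReal Topology

/-- The squared quadratic Wasserstein cost between two measures on `ℝ^d`: the infimum
over couplings of the integral of `|x − y|²`. -/
noncomputable def W2sq {d : ℕ}
    (μ ν : Measure (EuclideanSpace ℝ (Fin d))) : ℝ≥0∞ :=
  sInf { C | ∃ π : Measure (EuclideanSpace ℝ (Fin d) × EuclideanSpace ℝ (Fin d)),
    π.map Prod.fst = μ ∧ π.map Prod.snd = ν ∧
    C = ∫⁻ q, ENNReal.ofReal (‖q.1 - q.2‖ ^ 2) ∂π }

namespace GeoAux

local notation "𝔼" d => EuclideanSpace ℝ (Fin d)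

lemma W2sq_le {d : ℕ} {μ ν : Measure (𝔼 d)} (π : Measure ((𝔼 d) × (𝔼 d)))
    (h1 : π.map Prod.fst = μ) (h2 : π.map Prod.snd = ν) :
    W2sq μ ν ≤ ∫⁻ q, ENNReal.ofReal (‖q.1 - q.2‖ ^ 2) ∂π :=
  sInf_le ⟨π, h1, h2, rfl⟩

/-- Gluing. -/
lemma glue {d : ℕ} (γ η : Measure ((𝔼 d) × (𝔼 d))) [IsProbabilityMeasure γ]
    [IsProbabilityMeasure η] (S : (𝔼 d) → (𝔼 d)) (hS : Measurable S)
    (h : (γ.map Prod.fst).map S = η.map Prod.fst) :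
    ∃ Q : Measure (((𝔼 d) × (𝔼 d)) × (𝔼 d)), Q.map Prod.fst = γ ∧
      Q.map (fun p => (S p.1.1, p.2)) = η := by
  have hm : Measurable (fun p : (𝔼 d) × (𝔼 d) => S p.1) := hS.comp measurable_fst
  refine ⟨γ.compProd (η.condKernel.comap _ hm), ?_, ?_⟩
  · exact Measure.fst_compProd _ _
  · have hη : η = (γ.map (fun p => S p.1)).compProd η.condKernel := by
      conv_lhs => rw [← η.disintegrate η.condKernel]
      congr 1
      rw [Measure.fst, ← h, Measure.map_map hS measurable_fst]
      rfl
    conv_rhs => rw [hη]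
    have : IsProbabilityMeasure (γ.map (fun p => S p.1)) :=
      Measure.isProbabilityMeasure_map hm.aemeasurable
    ext s hs
    have hm2 : Measurable (fun p : ((𝔼 d) × (𝔼 d)) × (𝔼 d) => (S p.1.1, p.2)) := by fun_prop
    rw [Measure.map_apply hm2 hs, Measure.compProd_apply (hm2 hs), Measure.compProd_apply hs,
      lintegral_map (ProbabilityTheory.Kernel.measurable_kernel_prodMk_left hs) hm]
    rfl

lemma cost_map {d : ℕ} {α : Type*} [MeasurableSpace α] (Q : Measure α) (f : α → (𝔼 d)) :
    ∫⁻ q, ENNReal.ofReal (‖f q‖ ^ 2) ∂Q = eLpNorm f 2 Q ^ 2 := by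
  have := eLpNorm_nnreal_pow_eq_lintegral (μ := Q) (f := f) (p := 2) (by norm_num)
  norm_num at this
  rw [this]
  refine lintegral_congr fun x => ?_
  rw [← ofReal_norm, ENNReal.ofReal_pow (norm_nonneg _)]

/-- Gluing with cost estimate. -/
lemma glue_cost {d : ℕ} (γ η : Measure ((𝔼 d) × (𝔼 d))) [IsProbabilityMeasure γ]
    [IsProbabilityMeasure η] (S : (𝔼 d) → (𝔼 d)) (hS : Measurable S)
    (h : (γ.map Prod.fst).map S = η.map Prod.fst) :
    ∃ Q : Measure (((𝔼 d) × (𝔼 d)) × (𝔼 d)), Q.map Prod.fst = γ ∧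
      Q.map (fun p => (S p.1.1, p.2)) = η ∧
      (Q.map (fun p => (p.1.2, p.2))).map Prod.fst = γ.map Prod.snd ∧
      (Q.map (fun p => (p.1.2, p.2))).map Prod.snd = η.map Prod.snd ∧
      ∫⁻ q, ENNReal.ofReal (‖q.1 - q.2‖ ^ 2) ∂(Q.map (fun p => (p.1.2, p.2))) ≤
        (eLpNorm (fun q => q.1 - q.2) 2 γ + eLpNorm (fun x => x - S x) 2 (γ.map Prod.fst)
          + eLpNorm (fun q => q.1 - q.2) 2 η) ^ 2 := by
  obtain ⟨Q, h1, h2⟩ := glue γ η S hS h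
  have hmm : Measurable (fun p : ((𝔼 d) × (𝔼 d)) × (𝔼 d) => (p.1.2, p.2)) := by fun_prop
  have hm2 : Measurable (fun p : ((𝔼 d) × (𝔼 d)) × (𝔼 d) => (S p.1.1, p.2)) := by fun_prop
  refine ⟨Q, h1, h2, ?_, ?_, ?_⟩
  · rw [← h1, Measure.map_map measurable_fst hmm, Measure.map_map measurable_snd measurable_fst]
    rfl
  · rw [← h2, Measure.map_map measurable_snd hmm, Measure.map_map measurable_snd hm2]
    rfl
  · rw [lintegral_map (by fun_prop) hmm, cost_map]
    have e1 : eLpNorm (fun q => q.1 - q.2) 2 γ = eLpNorm (fun p => p.1.1 - p.1.2) 2 Q := by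
      rw [← h1, eLpNorm_map_measure (by fun_prop) (by fun_prop)]; rfl
    have e2 : eLpNorm (fun x => x - S x) 2 (γ.map Prod.fst)
        = eLpNorm (fun p => p.1.1 - S p.1.1) 2 Q := by
      rw [← h1, Measure.map_map measurable_fst measurable_fst,
        eLpNorm_map_measure (by fun_prop) (by fun_prop)]; rfl
    have e3 : eLpNorm (fun q => q.1 - q.2) 2 η = eLpNorm (fun p => S p.1.1 - p.2) 2 Q := by
      rw [← h2, eLpNorm_map_measure (by fun_prop) (by fun_prop)]; rfl
    rw [e1, e2, e3]
    gcongr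
    have e4 : (fun p : ((𝔼 d) × (𝔼 d)) × (𝔼 d) => p.1.2 - p.2) =
        (-(fun p => p.1.1 - p.1.2) + (fun p => p.1.1 - S p.1.1)) + (fun p => S p.1.1 - p.2) := by
      ext1 p; simp
    rw [e4]
    refine (eLpNorm_add_le (by fun_prop) (by fun_prop) (by norm_num)).trans ?_
    gcongr
    refine (eLpNorm_add_le (by fun_prop) (by fun_prop) (by norm_num)).trans ?_
    rw [eLpNorm_neg]

/-- Swapping: near-optimal plans are nearly monotone relative to the optimal map. -/
lemma swap {d : ℕ} (μ ν : Measure (𝔼 d)) [IsProbabilityMeasure μ] 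
    (T : (𝔼 d) → (𝔼 d)) (hT : Measurable T) (hpush : μ.map T = ν)
    (hopt : (∫⁻ x, ENNReal.ofReal (‖x - T x‖ ^ 2) ∂μ) = W2sq μ ν)
    (hW : W2sq μ ν ≠ ⊤) (ρ : Measure ((𝔼 d) × (𝔼 d))) [IsProbabilityMeasure ρ]
    (h1 : ρ.map Prod.fst = μ) (h2 : ρ.map Prod.snd = ν) :
    W2sq μ ν + 2 * ∫⁻ p, ENNReal.ofReal (- inner ℝ (p.1.1 - p.2) (p.1.2 - T p.2)) ∂(ρ.prod μ)
      ≤ ∫⁻ q, ENNReal.ofReal (‖q.1 - q.2‖ ^ 2) ∂ρ := by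
  classical
  set P := ρ.prod μ
  set s : Set (((𝔼 d) × (𝔼 d)) × (𝔼 d)) := {p | inner ℝ (p.1.1 - p.2) (p.1.2 - T p.2) < 0} with hs
  have hsm : MeasurableSet s := measurableSet_lt (by fun_prop) measurable_const
  set f : ((𝔼 d) × (𝔼 d)) × (𝔼 d) → (𝔼 d) := s.piecewise (fun p => T p.2) (fun p => p.1.2) with hf
  set g : ((𝔼 d) × (𝔼 d)) × (𝔼 d) → (𝔼 d) := s.piecewise (fun p => p.1.2) (fun p => T p.2) with hg
  have hfm : Measurable f := Measurable.piecewise hsm (by fun_prop) (by fun_prop)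
  have hgm : Measurable g := Measurable.piecewise hsm (by fun_prop) (by fun_prop)
  have hFm : Measurable (fun p => (p.1.1, f p)) := by fun_prop
  have hGm : Measurable (fun p => (p.2, g p)) := by fun_prop
  have P1 : P.map Prod.fst = ρ := by simp [P]
  have P2 : P.map Prod.snd = μ := by simp [P]
  have q1 : P.map (fun p => p.1.1) = μ := by
    rw [← h1, ← P1, Measure.map_map measurable_fst measurable_fst]; rfl
  have q2 : P.map (fun p => p.1.2) = ν := by
    rw [← h2, ← P1, Measure.map_map measurable_snd measurable_fst]; rfl
  have q3 : P.map (fun p => T p.2) = ν := by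
    rw [← hpush]; conv_rhs => rw [← P2, Measure.map_map hT measurable_snd]
    rfl
  have half : ∀ m : Measure (𝔼 d), (2:ℝ≥0∞)⁻¹ • (m + m) = m := by
    intro m
    rw [← two_smul ℝ≥0∞ m, smul_smul, ENNReal.inv_mul_cancel (by norm_num) (by norm_num), one_smul]
  have hfg : P.map f + P.map g = ν + ν := by
    nth_rewrite 1 [← q2]
    rw [← q3]
    ext A hA
    rw [Measure.add_apply, Measure.add_apply, ← lintegral_indicator_one hA,
      ← lintegral_indicator_one hA, ← lintegral_indicator_one hA, ← lintegral_indicator_one hA,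
      lintegral_map (by measurability) hfm, lintegral_map (by measurability) hgm,
      lintegral_map (by measurability) (by fun_prop), lintegral_map (by measurability) (by fun_prop),
      ← lintegral_add_left, ← lintegral_add_left]
    · refine lintegral_congr fun p => ?_
      by_cases hp : p ∈ s
      · simp [f, g, hp, add_comm]
      · simp [f, g, hp]
    · exact (measurable_one.indicator hA).comp (by fun_prop)
    · exact (measurable_one.indicator hA).comp hfm
  have key := W2sq_le (μ := μ) (ν := ν)
    ((2:ℝ≥0∞)⁻¹ • (P.map (fun p => (p.1.1, f p)) + P.map (fun p => (p.2, g p))))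
    (by
      rw [Measure.map_smul, Measure.map_add _ _ measurable_fst,
        Measure.map_map measurable_fst hFm, Measure.map_map measurable_fst hGm]
      have a : P.map (Prod.fst ∘ fun p => (p.1.1, f p)) = μ := q1
      have b : P.map (Prod.fst ∘ fun p => (p.2, g p)) = μ := P2
      rw [a, b, half])
    (by
      rw [Measure.map_smul, Measure.map_add _ _ measurable_snd,
        Measure.map_map measurable_snd hFm, Measure.map_map measurable_snd hGm]
      have a : P.map (Prod.snd ∘ fun p => (p.1.1, f p)) = P.map f := rfl
      have b : P.map (Prod.snd ∘ fun p => (p.2, g p)) = P.map g := rfl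
      rw [a, b, hfg, half])
  rw [lintegral_smul_measure, lintegral_add_measure, lintegral_map (by fun_prop) hFm,
    lintegral_map (by fun_prop) hGm, smul_eq_mul] at key
  have key2 : W2sq μ ν + W2sq μ ν ≤ ∫⁻ p, ENNReal.ofReal (‖p.1.1 - f p‖ ^ 2) ∂P +
      ∫⁻ p, ENNReal.ofReal (‖p.2 - g p‖ ^ 2) ∂P := by
    rw [← two_mul]
    calc _ ≤ 2 * _ := mul_le_mul_right key _
      _ = _ := by rw [← mul_assoc, ENNReal.mul_inv_cancel (by norm_num) (by norm_num), one_mul]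
  have c1 : ∫⁻ q, ENNReal.ofReal (‖q.1 - q.2‖ ^ 2) ∂ρ
      = ∫⁻ p, ENNReal.ofReal (‖p.1.1 - p.1.2‖ ^ 2) ∂P := by
    rw [← P1, lintegral_map (by fun_prop) measurable_fst]
  have c2 : W2sq μ ν = ∫⁻ p, ENNReal.ofReal (‖p.2 - T p.2‖ ^ 2) ∂P := by
    rw [← hopt]
    conv_lhs => rw [← P2, lintegral_map (by fun_prop) measurable_snd]
  have c3 : (∫⁻ p, ENNReal.ofReal (‖p.1.1 - f p‖ ^ 2) ∂P +
      ∫⁻ p, ENNReal.ofReal (‖p.2 - g p‖ ^ 2) ∂P) +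
      2 * ∫⁻ p, ENNReal.ofReal (- inner ℝ (p.1.1 - p.2) (p.1.2 - T p.2)) ∂P =
      ∫⁻ p, ENNReal.ofReal (‖p.1.1 - p.1.2‖ ^ 2) ∂P +
      ∫⁻ p, ENNReal.ofReal (‖p.2 - T p.2‖ ^ 2) ∂P := by
    rw [← lintegral_const_mul _ (by fun_prop), ← lintegral_add_left (by fun_prop),
      ← lintegral_add_left (by fun_prop), ← lintegral_add_left (by fun_prop)]
    refine lintegral_congr fun p => ?_
    have e : ∀ a : ℝ, 2 * ENNReal.ofReal a = ENNReal.ofReal (2 * a) := fun a => by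
      rw [ENNReal.ofReal_mul (by norm_num)]; norm_num
    by_cases hp : p ∈ s
    · have hp' : inner ℝ (p.1.1 - p.2) (p.1.2 - T p.2) < 0 := hp
      simp only [f, g, Set.piecewise_eq_of_mem _ _ _ hp]
      rw [e, ← ENNReal.ofReal_add (by positivity) (by positivity),
        ← ENNReal.ofReal_add (by positivity) (by linarith),
        ← ENNReal.ofReal_add (by positivity) (by positivity)]
      congr 1
      simp only [norm_sub_sq_real, inner_sub_left, inner_sub_right]
      ring
    · have hp' : 0 ≤ inner ℝ (p.1.1 - p.2) (p.1.2 - T p.2) := not_lt.1 hp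
      simp only [f, g, Set.piecewise_eq_of_notMem _ _ _ hp]
      rw [ENNReal.ofReal_of_nonpos (by linarith : - inner ℝ (p.1.1 - p.2) (p.1.2 - T p.2) ≤ 0)]
      simp
  rw [← c1, ← c2] at c3
  have := add_le_add_left key2
    (2 * ∫⁻ p, ENNReal.ofReal (- inner ℝ (p.1.1 - p.2) (p.1.2 - T p.2)) ∂P)
  rw [c3, add_assoc, add_comm (W2sq μ ν)] at this
  rw [add_comm _ (W2sq μ ν)] at this
  exact (ENNReal.add_le_add_iff_left hW).1 (by rw [add_comm] at this; simpa [add_comm, add_left_comm, add_assoc] using this)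

/-- The truncated defect of monotonicity. -/
noncomputable def gdef {d : ℕ} (μ : Measure (𝔼 d)) (T : (𝔼 d) → (𝔼 d)) (q : (𝔼 d) × (𝔼 d)) : ℝ :=
  ∫ x, min 1 (max 0 (- inner ℝ (q.1 - x) (q.2 - T x))) ∂μ

lemma gdef_int {d : ℕ} (μ : Measure (𝔼 d)) [IsProbabilityMeasure μ]
    (T : (𝔼 d) → (𝔼 d)) (hT : Measurable T) (q : (𝔼 d) × (𝔼 d)) :
    Integrable (fun x => min 1 (max 0 (- inner ℝ (q.1 - x) (q.2 - T x)))) μ := by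
  refine Integrable.mono' (integrable_const (1:ℝ)) (by fun_prop) (ae_of_all _ fun x => ?_)
  rw [Real.norm_of_nonneg (by positivity)]
  exact min_le_left _ _

lemma gdef_cont {d : ℕ} (μ : Measure (𝔼 d)) [IsProbabilityMeasure μ]
    (T : (𝔼 d) → (𝔼 d)) (hT : Measurable T) : Continuous (gdef μ T) := by
  refine continuous_of_dominated (bound := fun _ => 1) (fun q => (gdef_int μ T hT q).1)
    (fun q => ae_of_all _ fun x => ?_) (integrable_const _) (ae_of_all _ fun x => by fun_prop)
  rw [Real.norm_of_nonneg (by positivity)]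
  exact min_le_left _ _

lemma gdef_nonneg {d : ℕ} (μ : Measure (𝔼 d)) (T : (𝔼 d) → (𝔼 d)) (q) : 0 ≤ gdef μ T q :=
  integral_nonneg fun x => by positivity

lemma gdef_le {d : ℕ} (μ : Measure (𝔼 d)) [IsProbabilityMeasure μ]
    (T : (𝔼 d) → (𝔼 d)) (hT : Measurable T) (q : (𝔼 d) × (𝔼 d)) :
    ENNReal.ofReal (gdef μ T q) ≤ ∫⁻ x, ENNReal.ofReal (- inner ℝ (q.1 - x) (q.2 - T x)) ∂μ := by
  rw [gdef, ofReal_integral_eq_lintegral_ofReal (gdef_int μ T hT q)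
    (ae_of_all _ fun x => by positivity)]
  refine lintegral_mono fun x => ?_
  calc _ ≤ ENNReal.ofReal (max 0 (- inner ℝ (q.1 - x) (q.2 - T x))) :=
        ENNReal.ofReal_le_ofReal (min_le_right _ _)
    _ = _ := by rw [ENNReal.ofReal_max]; simp

lemma gdef_zero {d : ℕ} (μ : Measure (𝔼 d)) [IsProbabilityMeasure μ]
    (T : (𝔼 d) → (𝔼 d)) (hT : Measurable T) (q : (𝔼 d) × (𝔼 d)) (h : gdef μ T q = 0) (p)
    (hp : p ∈ (μ.map (fun x => (x, T x))).support) : 0 ≤ inner ℝ (q.1 - p.1) (q.2 - p.2) := by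
  by_contra! hlt
  have hm : Measurable (fun x => (x, T x)) := by fun_prop
  have hopen : IsOpen {p : (𝔼 d) × (𝔼 d) | inner ℝ (q.1 - p.1) (q.2 - p.2) < 0} :=
    isOpen_lt (by fun_prop) continuous_const
  refine Measure.subset_compl_support_of_isOpen hopen ?_ hlt hp
  rw [Measure.map_apply hm hopen.measurableSet]
  rw [gdef, integral_eq_zero_iff_of_nonneg (fun x => by positivity) (gdef_int μ T hT q)] at h
  refine measure_mono_null ?_ h
  intro x hx
  have hx' : inner ℝ (q.1 - x) (q.2 - T x) < 0 := hx
  simp only [Set.mem_compl_iff, Set.mem_ofPred_eq, Pi.zero_apply]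
  exact (lt_min one_pos (lt_max_of_lt_right (by linarith))).ne'

/-- Measure-zero criterion along lines. -/
lemma null_line {d : ℕ} (D : Set (𝔼 d)) (hD : MeasurableSet D) (i : Fin d)
    (h : ∀ x ∈ D, ∀ s : ℝ, 0 < s → x + s • EuclideanSpace.single i (1:ℝ) ∉ D) :
    volume D = 0 := by
  have : ∀ᵐ y : (𝔼 d), y ∈ Dᶜ := by
    refine ae_mem_of_ae_add_linearMap_mem
      (LinearMap.toSpanSingleton ℝ (𝔼 d) (EuclideanSpace.single i (1:ℝ))) volume volume hD.compl ?_
    intro y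
    refine measure_mono_null (t := {s : ℝ | y + s • EuclideanSpace.single i (1:ℝ) ∈ D}) ?_ ?_
    · intro s hs; simpa using hs
    · refine Set.Subsingleton.measure_zero ?_ _
      have aux : ∀ s t : ℝ, y + s • EuclideanSpace.single i (1:ℝ) ∈ D →
          y + t • EuclideanSpace.single i (1:ℝ) ∈ D → ¬ s < t := by
        intro s t hs ht hst
        refine h _ hs (t - s) (sub_pos.2 hst) ?_
        rw [add_assoc, ← add_smul]
        simpa using ht
      intro s hs t ht
      exact le_antisymm (not_lt.1 (aux _ _ ht hs)) (not_lt.1 (aux _ _ hs ht))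
  simpa [ae_iff] using this

lemma uniq {d : ℕ} (μ : Measure (𝔼 d)) [IsProbabilityMeasure μ] (hac : μ ≪ volume)
    (T : (𝔼 d) → (𝔼 d)) (hT : Measurable T) :
    ∀ᵐ x ∂μ, ∀ z, gdef μ T (x, z) = 0 → z = T x := by
  set Γ := (μ.map (fun x => (x, T x))).support with hΓ
  have hm : Measurable (fun x => (x, T x)) := by fun_prop
  have hA : ∀ᵐ x ∂μ, (x, T x) ∈ Γ := by
    exact ae_of_ae_map hm.aemeasurable (Measure.support_mem_ae (μ := μ.map (fun x => (x, T x))))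
  have hAm : MeasurableSet {x | (x, T x) ∈ Γ} := hm Measure.isClosed_support.measurableSet
  have proj : ∀ (C : Set ((𝔼 d) × (𝔼 d))), IsClosed C → ∀ n : ℕ,
      MeasurableSet (Prod.fst '' (C ∩ Metric.closedBall 0 n)) := fun C hC n =>
    (((isCompact_closedBall _ _).inter_left hC).image continuous_fst).measurableSet
  have hG : IsClosed {q | gdef μ T q = 0} := isClosed_eq (gdef_cont μ T hT) continuous_const
  have hci : ∀ i : Fin d, Continuous fun q : (𝔼 d) × (𝔼 d) => q.2 i := fun i => by fun_prop
  have hTi : ∀ i : Fin d, Measurable fun x => T x i := fun i => by fun_prop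
  have up : ∀ (i : Fin d) (r : ℚ) (n : ℕ), ∀ᵐ x ∂μ,
      ¬ (((x, T x) ∈ Γ ∧ T x i < r) ∧ x ∈ Prod.fst '' (({q | gdef μ T q = 0} ∩ {q | r ≤ q.2 i})
        ∩ Metric.closedBall 0 n)) := by
    intro i r n
    refine measure_eq_zero_iff_ae_notMem.1 (hac (null_line {x | _ ∧ _} ?_ i ?_))
    · exact ((hAm.inter (measurableSet_lt (hTi i) measurable_const)).inter
      (proj _ (hG.inter (isClosed_le continuous_const (hci i))) n))
    rintro x ⟨-, q, ⟨⟨hq0, hq⟩, -⟩, rfl⟩ s hs ⟨⟨h1, h2⟩, -⟩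
    have := gdef_zero μ T hT q hq0 _ h1
    simp [inner_smul_left, inner_sub_right, EuclideanSpace.inner_single_left] at this
    have hq : (r:ℝ) ≤ q.2 i := hq
    nlinarith
  have dn : ∀ (i : Fin d) (r : ℚ) (n : ℕ), ∀ᵐ x ∂μ,
      ¬ (((x, T x) ∈ Γ ∧ r < T x i) ∧ x ∈ Prod.fst '' (({q | gdef μ T q = 0} ∩ {q | q.2 i ≤ r})
        ∩ Metric.closedBall 0 n)) := by
    intro i r n
    refine measure_eq_zero_iff_ae_notMem.1 (hac (null_line {x | _ ∧ _} ?_ i ?_))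
    · exact ((hAm.inter (measurableSet_lt measurable_const (hTi i))).inter
      (proj _ (hG.inter (isClosed_le (hci i) continuous_const)) n))
    rintro x ⟨⟨h1, h2⟩, -⟩ s hs ⟨-, q, ⟨⟨hq0, hq⟩, -⟩, hqx⟩
    have := gdef_zero μ T hT q hq0 _ h1
    simp [hqx, inner_smul_left, inner_sub_right, EuclideanSpace.inner_single_left] at this
    have hq : q.2 i ≤ (r:ℝ) := hq
    nlinarith
  filter_upwards [hA, ae_all_iff.2 fun i => ae_all_iff.2 fun r => ae_all_iff.2 (up i r),
    ae_all_iff.2 fun i => ae_all_iff.2 fun r => ae_all_iff.2 (dn i r)] with x hx hu hd z hz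
  ext i
  obtain ⟨n, hn⟩ := exists_nat_ge ‖(x, z)‖
  rcases lt_trichotomy (z i) (T x i) with hlt | heq | hlt
  · obtain ⟨r, hr1, hr2⟩ := exists_rat_btwn hlt
    exact absurd ⟨⟨hx, hr2⟩, (x, z), ⟨⟨hz, hr1.le⟩, by simpa using hn⟩, rfl⟩ (hd i r n)
  · exact heq
  · obtain ⟨r, hr1, hr2⟩ := exists_rat_btwn hlt
    exact absurd ⟨⟨hx, hr1⟩, (x, z), ⟨⟨hz, hr2.le⟩, by simpa using hn⟩, rfl⟩ (hu i r n)

lemma isProb_of_map {α β : Type*} [MeasurableSpace α] [MeasurableSpace β] (π : Measure α)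
    (f : α → β) (hf : Measurable f) (m : Measure β) [IsProbabilityMeasure m] (h : π.map f = m) :
    IsProbabilityMeasure π :=
  ⟨by
    have : π.map f univ = 1 := by rw [h]; simp
    rwa [Measure.map_apply hf MeasurableSet.univ, preimage_univ] at this⟩

lemma bad {d : ℕ} (μ : Measure (𝔼 d)) [IsProbabilityMeasure μ] (hac : μ ≪ volume)
    (T : (𝔼 d) → (𝔼 d)) (hT : Measurable T) (ρ : ℕ → Measure ((𝔼 d) × (𝔼 d)))
    (h1 : ∀ k, (ρ k).map Prod.fst = μ)
    (hlim : Tendsto (fun k => ∫⁻ q, ENNReal.ofReal (gdef μ T q) ∂(ρ k)) atTop (𝓝 0))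
    (ε R : ℝ) (hε : 0 < ε) :
    Tendsto (fun k => ρ k {q | ε < ‖q.2 - T q.1‖ ∧ ‖q.2‖ < R}) atTop (𝓝 0) := by
  have hgc := gdef_cont μ T hT
  set D := TopologicalSpace.denseSeq (𝔼 d)
  set B : ℕ → Set (𝔼 d) := fun n => {x | ∃ j, ‖D j‖ < R ∧ ε < ‖D j - T x‖ ∧
    gdef μ T (x, D j) < 1 / ((n:ℝ) + 1)} with hB
  have hBm : ∀ n, MeasurableSet (B n) := by
    intro n
    have : B n = ⋃ j, ({x | ‖D j‖ < R} ∩ ({x | ε < ‖D j - T x‖} ∩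
      {x | gdef μ T (x, D j) < 1 / ((n:ℝ) + 1)})) := by
      ext x; simp [hB]
    rw [this]
    refine MeasurableSet.iUnion fun j => (MeasurableSet.const _).inter
      ((measurableSet_lt measurable_const (by fun_prop)).inter (measurableSet_lt ?_ measurable_const))
    exact (hgc.comp (by fun_prop : Continuous fun x => (x, D j))).measurable
  have hBa : Antitone B := by
    rintro m n hmn x ⟨j, a, b, c⟩
    exact ⟨j, a, b, c.trans_le (one_div_le_one_div_of_le (by positivity) (by gcongr))⟩
  have hB0 : μ (⋂ n, B n) = 0 := by
    have hu := uniq μ hac T hT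
    refine measure_mono_null ?_ hu
    intro x hx hx2
    have hx' : ∀ z, gdef μ T (x, z) = 0 → z = T x := hx2
    rw [Set.mem_iInter] at hx
    have hK : IsCompact (Metric.closedBall (0 : 𝔼 d) R ∩ {z | ε ≤ ‖z - T x‖}) :=
      (isCompact_closedBall _ _).inter_right (isClosed_le continuous_const (by fun_prop))
    have hmem : ∀ j, ‖D j‖ < R → ε < ‖D j - T x‖ →
        D j ∈ Metric.closedBall (0 : 𝔼 d) R ∩ {z | ε ≤ ‖z - T x‖} := fun j a b =>
      ⟨by simpa using a.le, b.le⟩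
    obtain ⟨j0, a0, b0, -⟩ := hx 0
    obtain ⟨z, hz, hmin⟩ := hK.exists_isMinOn ⟨_, hmem j0 a0 b0⟩
      (hgc.comp (by fun_prop : Continuous fun z => (x, z))).continuousOn
    have hz0 : gdef μ T (x, z) = 0 := by
      refine le_antisymm ?_ (gdef_nonneg _ _ _)
      refine le_of_forall_pos_le_add fun δ hδ => ?_
      obtain ⟨n, hn⟩ := exists_nat_one_div_lt hδ
      obtain ⟨j, a, b, c⟩ := hx n
      have : gdef μ T (x, z) ≤ gdef μ T (x, D j) := hmin (hmem j a b)
      linarith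
    have h2 : ε ≤ ‖z - T x‖ := hz.2
    rw [hx' z hz0] at h2
    simp at h2
    linarith
  have hBl : Tendsto (fun n => μ (B n)) atTop (𝓝 0) := by
    rw [← hB0]
    exact tendsto_measure_iInter_atTop (fun n => (hBm n).nullMeasurableSet) hBa
      ⟨0, measure_ne_top _ _⟩
  have hbound : ∀ n k, ρ k {q | ε < ‖q.2 - T q.1‖ ∧ ‖q.2‖ < R} ≤ μ (B n) +
      (∫⁻ q, ENNReal.ofReal (gdef μ T q) ∂(ρ k)) / ENNReal.ofReal (1 / ((n:ℝ) + 1)) := by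
    intro n k
    have hpos : 0 < 1 / ((n:ℝ) + 1) := by positivity
    have hsub : {q : (𝔼 d) × (𝔼 d) | ε < ‖q.2 - T q.1‖ ∧ ‖q.2‖ < R} ⊆ Prod.fst ⁻¹' (B n) ∪
        {q | ENNReal.ofReal (1 / ((n:ℝ) + 1)) ≤ ENNReal.ofReal (gdef μ T q)} := by
      rintro ⟨x, z⟩ ⟨hq1, hq2⟩
      by_cases hg : gdef μ T (x, z) < 1 / ((n:ℝ) + 1)
      · left
        have hopen : IsOpen ({z : 𝔼 d | ‖z‖ < R} ∩ ({z | ε < ‖z - T x‖} ∩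
            {z | gdef μ T (x, z) < 1 / ((n:ℝ) + 1)})) :=
          (isOpen_lt (by fun_prop) continuous_const).inter
            ((isOpen_lt continuous_const (by fun_prop)).inter
              (isOpen_lt (hgc.comp (by fun_prop)) continuous_const))
        obtain ⟨j, hj⟩ := (TopologicalSpace.denseRange_denseSeq (𝔼 d)).exists_mem_open hopen
          ⟨z, hq2, hq1, hg⟩
        exact ⟨j, hj.1, hj.2.1, hj.2.2⟩
      · right
        exact ENNReal.ofReal_le_ofReal (not_lt.1 hg)
    refine (measure_mono hsub).trans ((measure_union_le _ _).trans ?_)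
    gcongr
    · rw [← Measure.map_apply measurable_fst (hBm n), h1]
    · exact meas_ge_le_lintegral_div (hgc.measurable.ennreal_ofReal.aemeasurable)
        (by simpa using hpos) ENNReal.ofReal_ne_top
  rw [ENNReal.tendsto_nhds_zero]
  intro δ hδ
  have hδ2 : 0 < δ / 2 := ENNReal.half_pos hδ.ne'
  obtain ⟨n, hn⟩ := (ENNReal.tendsto_nhds_zero.1 hBl _ hδ2).exists
  have hl2 : Tendsto (fun k => (∫⁻ q, ENNReal.ofReal (gdef μ T q) ∂(ρ k)) /
      ENNReal.ofReal (1 / ((n:ℝ) + 1))) atTop (𝓝 0) := by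
    have := ENNReal.Tendsto.div_const hlim (b := ENNReal.ofReal (1 / ((n:ℝ) + 1)))
      (Or.inr (by simpa using (by positivity : (0:ℝ) < n + 1)))
    simpa using this
  filter_upwards [ENNReal.tendsto_nhds_zero.1 hl2 _ hδ2] with k hk
  calc _ ≤ _ := hbound n k
    _ ≤ δ / 2 + δ / 2 := add_le_add hn hk
    _ = δ := ENNReal.add_halves δ

lemma tail {d : ℕ} (ν : Measure (𝔼 d)) [IsProbabilityMeasure ν]
    (hmom : (∫⁻ x, ENNReal.ofReal (‖x‖ ^ 2) ∂ν) < ⊤) :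
    Tendsto (fun n : ℕ => ∫⁻ x in {x | (n:ℝ) ≤ ‖x‖}, ENNReal.ofReal (‖x‖ ^ 2) ∂ν) atTop (𝓝 0) := by
  refine tendsto_setLIntegral_zero hmom.ne ?_
  have : Tendsto (fun n : ℕ => ν {x | (n:ℝ) ≤ ‖x‖}) atTop (𝓝 (ν (⋂ n : ℕ, {x | (n:ℝ) ≤ ‖x‖}))) := by
    refine tendsto_measure_iInter_atTop
      (fun n => (measurableSet_le measurable_const (by fun_prop)).nullMeasurableSet) ?_
      ⟨0, measure_ne_top _ _⟩
    intro m n hmn x hx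
    have hx : (n:ℝ) ≤ ‖x‖ := hx
    exact (Nat.cast_le.2 hmn).trans hx
  have e : (⋂ n : ℕ, {x : 𝔼 d | (n:ℝ) ≤ ‖x‖}) = ∅ := by
    ext x
    simp only [Set.mem_iInter, Set.mem_empty_iff_false, iff_false, not_forall]
    obtain ⟨n, hn⟩ := exists_nat_gt ‖x‖
    exact ⟨n, not_le.2 hn⟩
  rw [e, measure_empty] at this
  exact this

lemma stab {d : ℕ} (μ ν : Measure (𝔼 d)) [IsProbabilityMeasure μ] [IsProbabilityMeasure ν]
    (hac : μ ≪ volume) (hmom : (∫⁻ x, ENNReal.ofReal (‖x‖ ^ 2) ∂ν) < ⊤)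
    (T : (𝔼 d) → (𝔼 d)) (hT : Measurable T) (hpush : μ.map T = ν)
    (ρ : ℕ → Measure ((𝔼 d) × (𝔼 d)))
    (h1 : ∀ k, (ρ k).map Prod.fst = μ) (h2 : ∀ k, (ρ k).map Prod.snd = ν)
    (hlim : Tendsto (fun k => ∫⁻ q, ENNReal.ofReal (gdef μ T q) ∂(ρ k)) atTop (𝓝 0)) :
    Tendsto (fun k => ∫⁻ q, ENNReal.ofReal (‖T q.1 - q.2‖ ^ 2) ∂(ρ k)) atTop (𝓝 0) := by
  have hprob : ∀ k, IsProbabilityMeasure (ρ k) := fun k =>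
    isProb_of_map _ _ measurable_fst _ (h1 k)
  have hbound : ∀ (ε : ℝ) (n k : ℕ), 0 < ε →
      ∫⁻ q, ENNReal.ofReal (‖T q.1 - q.2‖ ^ 2) ∂(ρ k) ≤
      (ENNReal.ofReal (ε ^ 2) + 8 * ∫⁻ x in {x | (n:ℝ) ≤ ‖x‖}, ENNReal.ofReal (‖x‖ ^ 2) ∂ν) +
      ENNReal.ofReal (4 * (n:ℝ) ^ 2) * ρ k {q | ε < ‖q.2 - T q.1‖ ∧ ‖q.2‖ < n} := by
    intro ε n k hε
    set A : Set (𝔼 d) := {x | (n:ℝ) ≤ ‖x‖} with hA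
    have hAm : MeasurableSet A := measurableSet_le measurable_const (by fun_prop)
    set φ : (𝔼 d) → ℝ≥0∞ := A.indicator (fun x => ENNReal.ofReal (‖x‖ ^ 2)) with hφ
    have hφm : Measurable φ := Measurable.indicator (by fun_prop) hAm
    set b : Set ((𝔼 d) × (𝔼 d)) := {q | ε < ‖q.2 - T q.1‖ ∧ ‖q.2‖ < n} with hb
    have hbm1 : MeasurableSet {q : (𝔼 d) × (𝔼 d) | ε < ‖q.2 - T q.1‖} :=
      measurableSet_lt measurable_const (by fun_prop)
    have hbm2 : MeasurableSet {q : (𝔼 d) × (𝔼 d) | ‖q.2‖ < n} :=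
      measurableSet_lt (by fun_prop) measurable_const
    have hbm : MeasurableSet b := hbm1.inter hbm2
    have t1 : ∫⁻ q, φ q.2 ∂(ρ k) = ∫⁻ x in A, ENNReal.ofReal (‖x‖ ^ 2) ∂ν := by
      rw [← lintegral_indicator hAm, ← h2 k, lintegral_map hφm measurable_snd]
    have t2 : ∫⁻ q, φ (T q.1) ∂(ρ k) = ∫⁻ x in A, ENNReal.ofReal (‖x‖ ^ 2) ∂ν := by
      rw [← lintegral_indicator hAm, ← hpush, lintegral_map hφm hT, ← h1 k,
        lintegral_map (f := fun a => φ (T a)) (hφm.comp hT) measurable_fst]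
    have t3 : ∫⁻ q, b.indicator (fun _ => ENNReal.ofReal (4 * (n:ℝ) ^ 2)) q ∂(ρ k) =
        ENNReal.ofReal (4 * (n:ℝ) ^ 2) * ρ k b := by
      rw [lintegral_indicator_const hbm]
    have four : ∀ a : ℝ, 4 * ENNReal.ofReal a = ENNReal.ofReal (4 * a) := fun a => by
      rw [ENNReal.ofReal_mul (by norm_num)]; norm_num
    have tot : ∫⁻ q, (ENNReal.ofReal (ε ^ 2) + 4 * φ q.2 + 4 * φ (T q.1)
        + b.indicator (fun _ => ENNReal.ofReal (4 * (n:ℝ) ^ 2)) q) ∂(ρ k) =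
        (ENNReal.ofReal (ε ^ 2) + 8 * ∫⁻ x in A, ENNReal.ofReal (‖x‖ ^ 2) ∂ν) +
        ENNReal.ofReal (4 * (n:ℝ) ^ 2) * ρ k b := by
      rw [lintegral_add_left (by fun_prop), lintegral_add_left (by fun_prop),
        lintegral_add_left (by fun_prop), lintegral_const_mul _ (by fun_prop),
        lintegral_const_mul _ (by fun_prop), t1, t2, t3]
      simp only [lintegral_const, measure_univ, mul_one]
      ring
    rw [← tot]
    refine lintegral_mono ?_
    rintro ⟨x, z⟩
    simp only
    have tri : ‖T x - z‖ ≤ ‖T x‖ + ‖z‖ := norm_sub_le _ _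
    have n1 := norm_nonneg (T x)
    have n2 := norm_nonneg z
    have n3 := norm_nonneg (T x - z)
    by_cases hmx : ‖T x‖ ≤ ‖z‖
    · by_cases hz : (n:ℝ) ≤ ‖z‖
      · have : φ z = ENNReal.ofReal (‖z‖ ^ 2) := Set.indicator_of_mem (by exact hz) _
        rw [this, four]
        refine le_add_right (le_add_right (le_add_left ?_))
        exact ENNReal.ofReal_le_ofReal (by nlinarith)
      · by_cases hd : ε < ‖z - T x‖
        · have : b.indicator (fun _ => ENNReal.ofReal (4 * (n:ℝ) ^ 2)) (x, z) = _ :=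
            Set.indicator_of_mem (by exact ⟨hd, not_le.1 hz⟩) _
          rw [this]
          refine le_add_left (ENNReal.ofReal_le_ofReal ?_)
          have := not_le.1 hz
          nlinarith
        · refine le_add_right (le_add_right (le_add_right (ENNReal.ofReal_le_ofReal ?_)))
          rw [norm_sub_rev] at hd
          have := not_lt.1 hd
          gcongr
    · have hmx := not_le.1 hmx
      by_cases hz : (n:ℝ) ≤ ‖T x‖
      · have : φ (T x) = ENNReal.ofReal (‖T x‖ ^ 2) := Set.indicator_of_mem (by exact hz) _
        rw [this, four]
        refine le_add_right (le_add_left ?_)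
        exact ENNReal.ofReal_le_ofReal (by nlinarith)
      · have hz := not_le.1 hz
        by_cases hd : ε < ‖z - T x‖
        · have : b.indicator (fun _ => ENNReal.ofReal (4 * (n:ℝ) ^ 2)) (x, z) = _ :=
            Set.indicator_of_mem (by exact ⟨hd, hmx.trans hz⟩) _
          rw [this]
          refine le_add_left (ENNReal.ofReal_le_ofReal ?_)
          nlinarith
        · refine le_add_right (le_add_right (le_add_right (ENNReal.ofReal_le_ofReal ?_)))
          rw [norm_sub_rev] at hd
          have := not_lt.1 hd
          gcongr
  have hh : Tendsto (fun n : ℕ => ENNReal.ofReal ((1 / ((n:ℝ) + 1)) ^ 2) +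
      8 * ∫⁻ x in {x | (n:ℝ) ≤ ‖x‖}, ENNReal.ofReal (‖x‖ ^ 2) ∂ν) atTop (𝓝 0) := by
    have a := ENNReal.tendsto_ofReal ((tendsto_one_div_add_atTop_nhds_zero_nat (𝕜 := ℝ)).pow 2)
    have c := ENNReal.Tendsto.const_mul (a := 8) (tail ν hmom) (Or.inr (by norm_num))
    simpa using a.add c
  rw [ENNReal.tendsto_nhds_zero]
  intro δ hδ
  have hδ2 : 0 < δ / 2 := ENNReal.half_pos hδ.ne'
  obtain ⟨n, hn⟩ := (ENNReal.tendsto_nhds_zero.1 hh _ hδ2).exists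
  have hpos : 0 < 1 / ((n:ℝ) + 1) := by positivity
  have hl2 : Tendsto (fun k => ENNReal.ofReal (4 * (n:ℝ) ^ 2) *
      ρ k {q | 1 / ((n:ℝ) + 1) < ‖q.2 - T q.1‖ ∧ ‖q.2‖ < n}) atTop (𝓝 0) := by
    have := ENNReal.Tendsto.const_mul (a := ENNReal.ofReal (4 * (n:ℝ) ^ 2))
      (bad μ hac T hT ρ h1 hlim _ n hpos) (Or.inr ENNReal.ofReal_ne_top)
    simpa using this
  filter_upwards [ENNReal.tendsto_nhds_zero.1 hl2 _ hδ2] with k hk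
  calc _ ≤ _ := hbound _ n k hpos
    _ ≤ δ / 2 + δ / 2 := add_le_add hn hk
    _ = δ := ENNReal.add_halves δ

lemma sq_eLp_tendsto {u : ℕ → ℝ≥0∞} (h : Tendsto (fun k => u k ^ 2) atTop (𝓝 0)) :
    Tendsto u atTop (𝓝 0) := by
  have := (ENNReal.continuous_rpow_const (y := (1/2 : ℝ))).tendsto 0 |>.comp h
  simp only [Function.comp_def] at this
  rw [ENNReal.zero_rpow_of_pos (by norm_num)] at this
  refine this.congr fun k => ?_
  rw [← ENNReal.rpow_natCast, ← ENNReal.rpow_mul]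
  norm_num

lemma pick {d : ℕ} (a : ℕ → Measure (𝔼 d)) (l : Measure (𝔼 d))
    (ha : ∀ k, IsProbabilityMeasure (a k)) [IsProbabilityMeasure l]
    (h : Tendsto (fun k => W2sq (a k) l) atTop (𝓝 0)) :
    ∃ γ : ℕ → Measure ((𝔼 d) × (𝔼 d)), (∀ k, IsProbabilityMeasure (γ k)) ∧
      (∀ k, (γ k).map Prod.fst = a k) ∧ (∀ k, (γ k).map Prod.snd = l) ∧
      Tendsto (fun k => eLpNorm (fun q => q.1 - q.2) 2 (γ k)) atTop (𝓝 0) := by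
  have ex : ∀ k : ℕ, ∃ π : Measure ((𝔼 d) × (𝔼 d)), π.map Prod.fst = a k ∧ π.map Prod.snd = l ∧
      ∫⁻ q, ENNReal.ofReal (‖q.1 - q.2‖ ^ 2) ∂π ≤ W2sq (a k) l + ENNReal.ofReal (1 / ((k:ℝ) + 1)) := by
    intro k
    by_cases ht : W2sq (a k) l = ⊤
    · exact ⟨(a k).prod l, by simp, by simp, by simp [ht]⟩
    · have hpos : ENNReal.ofReal (1 / ((k:ℝ) + 1)) ≠ 0 := by
        simpa using (by positivity : (0:ℝ) < k + 1)
      have := ENNReal.lt_add_right ht hpos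
      conv_lhs at this => rw [W2sq]
      obtain ⟨C, ⟨π, h1, h2, rfl⟩, h3⟩ := sInf_lt_iff.1 this
      exact ⟨π, h1, h2, h3.le⟩
  choose γ h1 h2 h3 using ex
  refine ⟨γ, fun k => isProb_of_map _ _ measurable_fst _ (h1 k), h1, h2, sq_eLp_tendsto ?_⟩
  have hz : Tendsto (fun k : ℕ => W2sq (a k) l + ENNReal.ofReal (1 / ((k:ℝ) + 1))) atTop (𝓝 0) := by
    have := ENNReal.tendsto_ofReal (tendsto_one_div_add_atTop_nhds_zero_nat (𝕜 := ℝ))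
    simpa using h.add this
  refine tendsto_of_tendsto_of_tendsto_of_le_of_le tendsto_const_nhds hz (fun _ => zero_le) ?_
  intro k
  simp only
  rw [← cost_map]
  exact h3 k

end GeoAux

open GeoAux

/-- Uniform-in-time stability of Wasserstein geodesics: with
`μ_k → μ`, `ν_k → ν` in quadratic Wasserstein distance, optimal transport maps `T_k, T`,
and displacement interpolants `μ_{k,t} = (T_{k,t})_# μ_k`, `μ_t = (T_t)_# μ` (where
`T_{k,t} = (1−t)id + tT_k`, `T_t = (1−t)id + tT`), we have:
(i) `sup_{t ∈ [0,1]} d_2(μ_{k,t}, μ_t) → 0` and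
(ii) there are couplings `θ_k` of `μ` and `μ_k` with
`sup_{t∈[0,1]} ∫ (|T_t(x) − T_{k,t}(y)|² + |(T(x)−x) − (T_k(y)−y)|²) dθ_k → 0`. -/
theorem geodesic_TL2_stability
    (d : ℕ)
    (μ : ℕ → Measure (EuclideanSpace ℝ (Fin d))) (μl : Measure (EuclideanSpace ℝ (Fin d)))
    (ν : ℕ → Measure (EuclideanSpace ℝ (Fin d))) (νl : Measure (EuclideanSpace ℝ (Fin d)))
    (hμprob : ∀ k, IsProbabilityMeasure (μ k)) (hμlprob : IsProbabilityMeasure μl)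
    (hνprob : ∀ k, IsProbabilityMeasure (ν k)) (hνlprob : IsProbabilityMeasure νl)
    (hμac : ∀ k, μ k ≪ volume) (hμlac : μl ≪ volume)
    (hμmom : ∀ k, (∫⁻ x, ENNReal.ofReal (‖x‖ ^ 2) ∂(μ k)) < ⊤)
    (hμlmom : (∫⁻ x, ENNReal.ofReal (‖x‖ ^ 2) ∂μl) < ⊤)
    (hνmom : ∀ k, (∫⁻ x, ENNReal.ofReal (‖x‖ ^ 2) ∂(ν k)) < ⊤)
    (hνlmom : (∫⁻ x, ENNReal.ofReal (‖x‖ ^ 2) ∂νl) < ⊤)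
    (hμconv : Tendsto (fun k => W2sq (μ k) μl) atTop (𝓝 0))
    (hνconv : Tendsto (fun k => W2sq (ν k) νl) atTop (𝓝 0))
    (T : ℕ → EuclideanSpace ℝ (Fin d) → EuclideanSpace ℝ (Fin d))
    (Tl : EuclideanSpace ℝ (Fin d) → EuclideanSpace ℝ (Fin d))
    (hTmeas : ∀ k, Measurable (T k)) (hTlmeas : Measurable Tl)
    (hTpush : ∀ k, (μ k).map (T k) = ν k) (hTlpush : μl.map Tl = νl)
    (hTopt : ∀ k, (∫⁻ x, ENNReal.ofReal (‖x - T k x‖ ^ 2) ∂(μ k)) = W2sq (μ k) (ν k))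
    (hTlopt : (∫⁻ x, ENNReal.ofReal (‖x - Tl x‖ ^ 2) ∂μl) = W2sq μl νl) :
    Tendsto (fun k => ⨆ t ∈ Icc (0:ℝ) 1,
        W2sq ((μ k).map (fun x => (1 - t) • x + t • T k x))
          (μl.map (fun x => (1 - t) • x + t • Tl x)))
      atTop (𝓝 0) ∧
    ∃ θ : ℕ → Measure (EuclideanSpace ℝ (Fin d) × EuclideanSpace ℝ (Fin d)),
      (∀ k, (θ k).map Prod.fst = μl ∧ (θ k).map Prod.snd = μ k) ∧
      Tendsto (fun k => ⨆ t ∈ Icc (0:ℝ) 1,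
          ∫⁻ q, ENNReal.ofReal
            (‖((1 - t) • q.1 + t • Tl q.1) - ((1 - t) • q.2 + t • T k q.2)‖ ^ 2 +
              ‖(Tl q.1 - q.1) - (T k q.2 - q.2)‖ ^ 2) ∂(θ k))
        atTop (𝓝 0) := by
  classical
  -- couplings
  obtain ⟨γ, γp, γ1, γ2, γl⟩ := pick μ μl hμprob hμconv
  obtain ⟨η, ηp, η1, η2, ηl⟩ := pick ν νl hνprob hνconv
  set N := eLpNorm (fun x => x - Tl x) 2 μl with hN
  have hNW : N ^ 2 = W2sq μl νl := by rw [← hTlopt, cost_map]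
  have fin : ∀ m : Measure (EuclideanSpace ℝ (Fin d)),
      (∫⁻ x, ENNReal.ofReal (‖x‖ ^ 2) ∂m) < ⊤ → eLpNorm (fun x => x) 2 m ≠ ⊤ := by
    intro m hm h
    rw [cost_map, h] at hm
    simp at hm
  have hNfin : N ≠ ⊤ := by
    have e : eLpNorm Tl 2 μl = eLpNorm (fun x => x) 2 νl := by
      rw [← hTlpush, eLpNorm_map_measure (by fun_prop) (by fun_prop)]; rfl
    refine ne_top_of_le_ne_top (b := eLpNorm (fun x => x) 2 μl + eLpNorm Tl 2 μl) ?_ ?_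
    · rw [e]; exact ENNReal.add_ne_top.2 ⟨fin _ hμlmom, fin _ hνlmom⟩
    · exact eLpNorm_sub_le (by fun_prop) (by fun_prop) (by norm_num)
  have hWfin : W2sq μl νl ≠ ⊤ := by rw [← hNW]; exact ENNReal.pow_ne_top hNfin
  set a : ℕ → ℝ≥0∞ := fun k => eLpNorm (fun q => q.1 - q.2) 2 (γ k) with ha
  set b : ℕ → ℝ≥0∞ := fun k => eLpNorm (fun q => q.1 - q.2) 2 (η k) with hb
  have swapc : ∀ π : Measure (EuclideanSpace ℝ (Fin d) × EuclideanSpace ℝ (Fin d)),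
      eLpNorm (fun q => q.1 - q.2) 2 (π.map Prod.swap) = eLpNorm (fun q => q.1 - q.2) 2 π := by
    intro π
    rw [eLpNorm_map_measure (by fun_prop) (by fun_prop), ← eLpNorm_neg]
    congr 1
    ext1 q
    simp
  have sw1 : ∀ π : Measure (EuclideanSpace ℝ (Fin d) × EuclideanSpace ℝ (Fin d)),
      (π.map Prod.swap).map Prod.fst = π.map Prod.snd := fun π => by
    rw [Measure.map_map measurable_fst measurable_swap]; rfl
  have sw2 : ∀ π : Measure (EuclideanSpace ℝ (Fin d) × EuclideanSpace ℝ (Fin d)),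
      (π.map Prod.swap).map Prod.snd = π.map Prod.fst := fun π => by
    rw [Measure.map_map measurable_snd measurable_swap]; rfl
  have hNk : ∀ k, eLpNorm (fun x => x - T k x) 2 (μ k) ≤ a k + N + b k := by
    intro k
    have p1 : IsProbabilityMeasure ((γ k).map Prod.swap) :=
      Measure.isProbabilityMeasure_map measurable_swap.aemeasurable
    have p2 : IsProbabilityMeasure ((η k).map Prod.swap) :=
      Measure.isProbabilityMeasure_map measurable_swap.aemeasurable
    obtain ⟨Q, -, -, q3, q4, q5⟩ := glue_cost ((γ k).map Prod.swap) ((η k).map Prod.swap) Tl hTlmeas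
      (by rw [sw1, sw1, γ2, η2, hTlpush])
    rw [sw2, γ1] at q3
    rw [sw2, η1] at q4
    have := (W2sq_le _ q3 q4).trans q5
    rw [← hTopt, cost_map, swapc, swapc, sw1, γ2] at this
    exact (ENNReal.pow_le_pow_left_iff (by norm_num)).1 this
  have exQ := fun k => glue_cost (γ k) (η k) (T k) (hTmeas k) (by rw [γ1, η1, hTpush])
  choose Q Q1 Q2 Q3 Q4 Q5 using exQ
  have hmm : Measurable (fun p : (EuclideanSpace ℝ (Fin d) × EuclideanSpace ℝ (Fin d)) ×
    EuclideanSpace ℝ (Fin d) => (p.1.2, p.2)) := by fun_prop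
  set ρ := fun k => (Q k).map (fun p => (p.1.2, p.2)) with hρ
  have ρ1 : ∀ k, (ρ k).map Prod.fst = μl := fun k => (Q3 k).trans (γ2 k)
  have ρ2 : ∀ k, (ρ k).map Prod.snd = νl := fun k => (Q4 k).trans (η2 k)
  have ρp : ∀ k, IsProbabilityMeasure (ρ k) := fun k =>
    isProb_of_map _ _ measurable_fst _ (ρ1 k)
  have hcost : ∀ k, ∫⁻ q, ENNReal.ofReal (‖q.1 - q.2‖ ^ 2) ∂(ρ k) ≤
      (a k + (a k + N + b k) + b k) ^ 2 := by
    intro k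
    refine (Q5 k).trans ?_
    rw [γ1]
    gcongr
    exact hNk k
  have hg : ∀ k, ∫⁻ q, ENNReal.ofReal (gdef μl Tl q) ∂(ρ k) ≤
      (a k + (a k + N + b k) + b k) ^ 2 - N ^ 2 := by
    intro k
    have s := (swap μl νl Tl hTlmeas hTlpush hTlopt hWfin (ρ k) (ρ1 k) (ρ2 k)).trans (hcost k)
    rw [← hNW] at s
    have s2 := ENNReal.le_sub_of_add_le_left (ENNReal.pow_ne_top hNfin) s
    refine le_trans ?_ s2
    rw [lintegral_prod _ (by fun_prop), two_mul]
    refine le_add_right (lintegral_mono fun q => gdef_le μl Tl hTlmeas q)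
  have hglim : Tendsto (fun k => ∫⁻ q, ENNReal.ofReal (gdef μl Tl q) ∂(ρ k)) atTop (𝓝 0) := by
    have l1 : Tendsto (fun k => (a k + (a k + N + b k) + b k) ^ 2) atTop (𝓝 (N ^ 2)) := by
      have := ENNReal.Tendsto.pow (n := 2)
        ((γl.add ((γl.add (tendsto_const_nhds (x := N))).add ηl)).add ηl)
      simpa using this
    have l2 := ENNReal.Tendsto.sub l1 (tendsto_const_nhds (x := N ^ 2))
      (Or.inl (ENNReal.pow_ne_top hNfin))
    rw [tsub_self] at l2
    exact tendsto_of_tendsto_of_tendsto_of_le_of_le tendsto_const_nhds l2 (fun _ => zero_le) hg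
  have hst := stab μl νl hμlac hνlmom Tl hTlmeas hTlpush ρ ρ1 ρ2 hglim
  -- the couplings
  set θ := fun k => (γ k).map Prod.swap with hθ
  set e : ℕ → ℝ≥0∞ := fun k => eLpNorm (fun q => Tl q.1 - T k q.2) 2 (θ k) with he
  have hθ1 : ∀ k, (θ k).map Prod.fst = μl := fun k => (sw1 _).trans (γ2 k)
  have hθ2 : ∀ k, (θ k).map Prod.snd = μ k := fun k => (sw2 _).trans (γ1 k)
  have hel : Tendsto e atTop (𝓝 0) := by
    have l1 : Tendsto (fun k => eLpNorm (fun q => Tl q.1 - q.2) 2 (ρ k)) atTop (𝓝 0) := by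
      apply sq_eLp_tendsto
      simpa only [cost_map] using hst
    have l2 := l1.add ηl
    rw [add_zero] at l2
    refine tendsto_of_tendsto_of_tendsto_of_le_of_le tendsto_const_nhds l2 (fun _ => zero_le) ?_
    intro k
    have hTk := hTmeas k
    have hm2 : Measurable (fun p : (EuclideanSpace ℝ (Fin d) × EuclideanSpace ℝ (Fin d)) ×
      EuclideanSpace ℝ (Fin d) => (T k p.1.1, p.2)) := by fun_prop
    have e1 : e k = eLpNorm (fun p => Tl p.1.2 - T k p.1.1) 2 (Q k) := by
      simp only [he, hθ]
      rw [← Q1 k, Measure.map_map measurable_swap measurable_fst,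
        eLpNorm_map_measure (by fun_prop) (by fun_prop)]
      rfl
    have e2 : eLpNorm (fun q => Tl q.1 - q.2) 2 (ρ k)
        = eLpNorm (fun p => Tl p.1.2 - p.2) 2 (Q k) := by
      simp only [hρ]
      rw [eLpNorm_map_measure (by fun_prop) (by fun_prop)]
      rfl
    have e3 : b k = eLpNorm (fun p => T k p.1.1 - p.2) 2 (Q k) := by
      simp only [hb]
      rw [← Q2 k, eLpNorm_map_measure (by fun_prop) (by fun_prop)]
      rfl
    simp only
    rw [e1, e2, e3]
    have e4 : (fun p : (EuclideanSpace ℝ (Fin d) × EuclideanSpace ℝ (Fin d)) ×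
        EuclideanSpace ℝ (Fin d) => Tl p.1.2 - T k p.1.1) =
        (fun p => Tl p.1.2 - p.2) - (fun p => T k p.1.1 - p.2) := by
      ext1 p; simp
    rw [e4]
    exact eLpNorm_sub_le (by fun_prop) (by fun_prop) (by norm_num)
  -- the common bound
  have hbl : Tendsto (fun k => 4 * (a k ^ 2 + e k ^ 2)) atTop (𝓝 0) := by
    have := ENNReal.Tendsto.const_mul (a := 4)
      ((ENNReal.Tendsto.pow (n := 2) γl).add (ENNReal.Tendsto.pow (n := 2) hel))
      (Or.inr (by norm_num))
    simpa using this
  have hmain : ∀ k, ∀ t ∈ Icc (0:ℝ) 1, ∫⁻ q, ENNReal.ofReal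
            (‖((1 - t) • q.1 + t • Tl q.1) - ((1 - t) • q.2 + t • T k q.2)‖ ^ 2 +
              ‖(Tl q.1 - q.1) - (T k q.2 - q.2)‖ ^ 2) ∂(θ k) ≤ 4 * (a k ^ 2 + e k ^ 2) := by
    intro k t ht
    have hTk := hTmeas k
    have ea : a k = eLpNorm (fun q => q.1 - q.2) 2 (θ k) := (swapc _).symm
    rw [ea]
    simp only [he]
    rw [← cost_map, ← cost_map, ← lintegral_add_left (by fun_prop),
      ← lintegral_const_mul _ (by fun_prop)]
    refine lintegral_mono fun q => ?_
    rw [← ENNReal.ofReal_add (by positivity) (by positivity)]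
    have four : ∀ a : ℝ, 4 * ENNReal.ofReal a = ENNReal.ofReal (4 * a) := fun a => by
      rw [ENNReal.ofReal_mul (by norm_num)]; norm_num
    rw [four]
    apply ENNReal.ofReal_le_ofReal
    set u := q.1 - q.2 with hu
    set v := Tl q.1 - T k q.2 with hv
    have r1 : ((1 - t) • q.1 + t • Tl q.1) - ((1 - t) • q.2 + t • T k q.2)
        = (1 - t) • u + t • v := by
      rw [hu, hv, smul_sub, smul_sub]; abel
    have r2 : (Tl q.1 - q.1) - (T k q.2 - q.2) = v - u := by rw [hu, hv]; abel
    rw [r1, r2]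
    have i1 : ‖(1 - t) • u + t • v‖ ≤ ‖u‖ + ‖v‖ := by
      refine (norm_add_le _ _).trans ?_
      rw [norm_smul, norm_smul, Real.norm_of_nonneg (by linarith [ht.2]),
        Real.norm_of_nonneg ht.1]
      nlinarith [ht.1, ht.2, norm_nonneg u, norm_nonneg v]
    have i2 : ‖v - u‖ ≤ ‖u‖ + ‖v‖ := by rw [add_comm]; exact norm_sub_le _ _
    have j1 := pow_le_pow_left₀ (norm_nonneg _) i1 2
    have j2 := pow_le_pow_left₀ (norm_nonneg _) i2 2
    nlinarith [sq_nonneg (‖u‖ - ‖v‖)]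
  refine ⟨?_, θ, fun k => ⟨hθ1 k, hθ2 k⟩, ?_⟩
  · refine tendsto_of_tendsto_of_tendsto_of_le_of_le tendsto_const_nhds hbl (fun _ => zero_le) ?_
    intro k
    refine iSup₂_le fun t ht => le_trans ?_ (hmain k t ht)
    have hTk := hTmeas k
    have mf : Measurable (fun q : EuclideanSpace ℝ (Fin d) × EuclideanSpace ℝ (Fin d) =>
      ((1 - t) • q.2 + t • T k q.2, (1 - t) • q.1 + t • Tl q.1)) := by fun_prop
    have m1 : Measurable (fun x => (1 - t) • x + t • T k x) := by fun_prop
    have m2 : Measurable (fun x => (1 - t) • x + t • Tl x) := by fun_prop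
    refine (W2sq_le ((θ k).map (fun q =>
      ((1 - t) • q.2 + t • T k q.2, (1 - t) • q.1 + t • Tl q.1))) ?_ ?_).trans ?_
    · rw [← hθ2 k, Measure.map_map measurable_fst mf, Measure.map_map m1 measurable_snd]; rfl
    · rw [← hθ1 k, Measure.map_map measurable_snd mf, Measure.map_map m2 measurable_fst]; rfl
    · rw [lintegral_map (by fun_prop) mf]
      refine lintegral_mono fun q => ENNReal.ofReal_le_ofReal ?_
      simp only
      rw [norm_sub_rev]
      exact le_add_of_nonneg_right (by positivity)
  · exact tendsto_of_tendsto_of_tendsto_of_le_of_le tendsto_const_nhds hbl (fun _ => zero_le)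
      fun k => iSup₂_le fun t ht => hmain k t ht
end

section
/- Let ρ_0, ρ_1 : ℝ^d → [0,1] be measurable functions with compact support and equal positive integrals. Let ψ : ℝ^d → ℝ be convex and T : ℝ^d → ℝ^d a Borel map such that ψ is differentiable at Lebesgue-a.e. x with gradient ∇ψ(x) = T(x), and such that T_#(ρ_0 dx) = ρ_1 dx. For t ∈ [0,1] let μ_t = ((1−t)·id + t·T)_# (ρ_0 dx) be the displacement interpolant. Then for every t ∈ [0,1] and every Borel set A ⊆ ℝ^d one has μ_t(A) ≤ |A| (the Lebesgue measure of A); equivalently, μ_t is absolutely continuous with respect to Lebesgue measure with density at most 1 almost everywhere. -/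
open Set MeasureTheory
open scoped ENNReal

section helpers
open Filter Topology
open scoped NNReal

variable {E : Type*} [NormedAddCommGroup E] [InnerProductSpace ℝ E]

/-- If `l ≤ r + s * c` for all `s ∈ (0,1]` then `l ≤ r`. -/
lemma le_of_forall_small {l r c : ℝ} (h : ∀ s : ℝ, 0 < s → s ≤ 1 → l ≤ r + s * c) : l ≤ r := by
  have h1 : Tendsto (fun s : ℝ => r + s * c) (𝓝[>] 0) (𝓝 (r + 0 * c)) := by
    apply Tendsto.mono_left _ nhdsWithin_le_nhds
    exact (Continuous.tendsto (by fun_prop) 0)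
  rw [zero_mul, add_zero] at h1
  refine ge_of_tendsto h1 ?_
  filter_upwards [Ioc_mem_nhdsGT (zero_lt_one (α := ℝ))] with s hs
  exact h s hs.1 hs.2

lemma gradient_ineq [CompleteSpace E] {ψ : E → ℝ} (hψ : ConvexOn ℝ univ ψ) {x g : E}
    (h : HasGradientAt ψ g x) (z : E) : ψ x + inner ℝ g (z - x) ≤ ψ z := by
  have hd : HasDerivAt (fun s : ℝ => ψ (AffineMap.lineMap x z s)) (inner ℝ g (z - x)) 0 := by
    have h1 := h.hasFDerivAt
    have h2 : HasDerivAt (fun s : ℝ => AffineMap.lineMap x z s) (z - x) (0:ℝ) :=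
      AffineMap.hasDerivAt_lineMap
    have h3 : HasFDerivAt ψ (InnerProductSpace.toDual ℝ E g) (AffineMap.lineMap x z (0:ℝ)) := by
      simpa using h1
    have h4 := h3.comp_hasDerivAt (0:ℝ) h2
    rw [InnerProductSpace.toDual_apply_apply] at h4
    exact h4
  have hc : ConvexOn ℝ univ (fun s : ℝ => ψ (AffineMap.lineMap x z s)) := by
    have h4 := hψ.comp_affineMap (AffineMap.lineMap (k := ℝ) x z)
    rw [preimage_univ] at h4
    exact h4
  have := hc.le_slope_of_hasDerivAt (mem_univ 0) (mem_univ 1) zero_lt_one hd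
  simp [slope_def_field] at this
  linarith

lemma exists_resolvent [FiniteDimensional ℝ E] {p : E → ℝ} (hp : ConvexOn ℝ univ p) {a : ℝ}
    (ha : 0 < a) {x₀ q : E} (hq : ∀ x, p x₀ + inner ℝ q (x - x₀) ≤ p x) (y : E) :
    ∃ s : E, ∀ x, p s + inner ℝ (y - a • s) (x - s) ≤ p x := by
  have hpc : Continuous p := continuousOn_univ.1 (hp.continuousOn isOpen_univ)
  let G : E → ℝ := fun x => a / 2 * ‖x‖ ^ 2 + p x - inner ℝ y x
  have hG : Continuous G := by fun_prop
  have hlow : ∀ x, ‖x‖ * (a / 2 * ‖x‖ - ‖q - y‖) + (p x₀ - inner ℝ q x₀) ≤ G x := by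
    intro x
    have h1 := hq x
    have h2 : -(‖q - y‖ * ‖x‖) ≤ inner ℝ (q - y) x :=
      (abs_le.1 (abs_real_inner_le_norm (q - y) x)).1
    rw [inner_sub_right] at h1
    rw [inner_sub_left] at h2
    simp only [G]
    nlinarith
  have htend : Tendsto G (cocompact E) atTop := by
    refine tendsto_atTop_mono hlow ?_
    refine tendsto_atTop_add_const_right _ _ ?_
    refine (tendsto_norm_cocompact_atTop).atTop_mul_atTop₀ ?_
    refine tendsto_atTop_add_const_right _ _ ?_
    exact (tendsto_norm_cocompact_atTop).const_mul_atTop (by positivity)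
  obtain ⟨s, hs⟩ := hG.exists_forall_le htend
  refine ⟨s, fun x => ?_⟩
  have : p s + inner ℝ (y - a • s) (x - s) ≤ p x := by
    refine le_of_forall_small (c := a / 2 * ‖x - s‖ ^ 2) ?_
    intro r hr0 hr1
    have h1 := hs (s + r • (x - s))
    have h2 := hp.2 (mem_univ s) (mem_univ x) (sub_nonneg.2 hr1) hr0.le (by ring)
    have h3 : (1 - r) • s + r • x = s + r • (x - s) := by module
    rw [h3] at h2
    simp only [G, smul_eq_mul] at h1 h2
    rw [norm_add_sq_real, norm_smul, inner_add_right, inner_smul_right, inner_smul_right,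
      Real.norm_eq_abs, mul_pow, sq_abs] at h1
    rw [inner_sub_left, inner_smul_left]
    simp only [conj_trivial]
    have h4 : 0 ≤ r * (p x + r * (a / 2 * ‖x - s‖ ^ 2)
      - (p s + (inner ℝ y (x - s) - a * inner ℝ s (x - s)))) := by nlinarith
    have := nonneg_of_mul_nonneg_right h4 hr0
    linarith
  exact this

/-- Properties of a resolvent. -/
lemma resolvent_mono {p : E → ℝ} {a : ℝ} {y s y' s' : E}
    (h : ∀ x, p s + inner ℝ (y - a • s) (x - s) ≤ p x)
    (h' : ∀ x, p s' + inner ℝ (y' - a • s') (x - s') ≤ p x) :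
    a * ‖s - s'‖ ^ 2 ≤ inner ℝ (y - y') (s - s') := by
  have h1 := h s'
  have h2 := h' s
  rw [← real_inner_self_eq_norm_sq]
  simp only [inner_sub_left, inner_sub_right, inner_smul_left, conj_trivial] at *
  linarith

lemma resolvent_norm {p : E → ℝ} {a : ℝ} (ha : 0 < a) {y s y' s' : E}
    (h : ∀ x, p s + inner ℝ (y - a • s) (x - s) ≤ p x)
    (h' : ∀ x, p s' + inner ℝ (y' - a • s') (x - s') ≤ p x) :
    ‖s - s'‖ ≤ a⁻¹ * ‖y - y'‖ := by
  have h1 := resolvent_mono h h'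
  have h2 := real_inner_le_norm (y - y') (s - s')
  rw [inv_mul_eq_div, le_div_iff₀ ha]
  rcases (norm_nonneg (s - s')).eq_or_lt with h0 | h0
  · rw [← h0]; simp
  · refine le_of_mul_le_mul_right ?_ h0
    nlinarith

lemma resolvent_hasGradient [CompleteSpace E] {p : E → ℝ} {a : ℝ} (ha : 0 < a) {S : E → E}
    (hS : ∀ y x, p (S y) + inner ℝ (y - a • S y) (x - S y) ≤ p x) (y : E) :
    HasGradientAt (fun y => inner ℝ (S y) y - p (S y) - a / 2 * ‖S y‖ ^ 2) (S y) y := by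
  set φ : E → ℝ := fun y => inner ℝ (S y) y - p (S y) - a / 2 * ‖S y‖ ^ 2 with hφ
  have key : ∀ y z, φ y + inner ℝ (S y) (z - y) ≤ φ z := by
    intro y z
    have h1 := hS z (S y)
    have h2 : 0 ≤ a / 2 * ‖S y - S z‖ ^ 2 := by positivity
    simp only [hφ, ← real_inner_self_eq_norm_sq] at *
    simp only [inner_sub_left, inner_sub_right, inner_smul_left, conj_trivial] at *
    have e1 := real_inner_comm (S y) (S z)
    have e2 := real_inner_comm (S y) z
    have e3 := real_inner_comm (S z) z
    rw [e1] at h2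
    nlinarith
  rw [hasGradientAt_iff_isLittleO]
  have hO : (fun z => φ z - φ y - inner ℝ (S y) (z - y)) =O[𝓝 y] fun z => ‖z - y‖ ^ 2 := by
    refine Asymptotics.IsBigO.of_bound a⁻¹ (Eventually.of_forall fun z => ?_)
    have h1 := key y z
    have h2 := key z y
    have h3 := resolvent_norm ha (hS z) (hS y)
    have h4 := real_inner_le_norm (S z - S y) (z - y)
    have h5 : ‖S z - S y‖ * ‖z - y‖ ≤ a⁻¹ * ‖z - y‖ * ‖z - y‖ := by gcongr
    rw [Real.norm_eq_abs, abs_of_nonneg (by linarith), Real.norm_eq_abs, abs_of_nonneg (by positivity)]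
    have h6 : inner ℝ (S z) (y - z) = - inner ℝ (S z) (z - y) := by
      rw [← inner_neg_right, neg_sub]
    rw [inner_sub_left] at h4
    nlinarith
  refine hO.trans_isLittleO ?_
  exact Asymptotics.isLittleO_pow_sub_sub y one_lt_two

lemma det_dichotomy [FiniteDimensional ℝ E] {M : E →ₗ[ℝ] E} (hM : M.IsSymmetric) {a t : ℝ}
    (ha : 0 < a) (ht : 0 < t) (hat : a + t = 1) (hpos : ∀ v, a * ‖M v‖ ^ 2 ≤ inner ℝ v (M v)) :
    |LinearMap.det M| ≤ 1 ∨ |LinearMap.det (t⁻¹ • (LinearMap.id - a • M))| ≤ 1 := by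
  set n := Module.finrank ℝ E with hn
  set l := hM.eigenvalues hn.symm with hl
  have hMm := hM.toMatrix_eigenvectorBasis hn.symm
  set b := (hM.eigenvectorBasis hn.symm).toBasis with hb
  have hdM : LinearMap.det M = ∏ i, l i := by
    rw [← LinearMap.det_toMatrix b, hMm, Matrix.det_diagonal]; simp [hl]
  have hdN : LinearMap.det (t⁻¹ • (LinearMap.id - a • M)) = ∏ i, (t⁻¹ * (1 - a * l i)) := by
    rw [← LinearMap.det_toMatrix b]
    have : LinearMap.toMatrix b b (t⁻¹ • (LinearMap.id - a • M)) =
        Matrix.diagonal fun i => t⁻¹ * (1 - a * l i) := by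
      rw [map_smul, map_sub, map_smul, hMm, LinearMap.toMatrix_id]
      ext i j
      by_cases h : i = j
      · subst h; simp [hl]
      · simp [h]
    rw [this, Matrix.det_diagonal]
  have hl1 : ∀ i, a * l i ^ 2 ≤ l i := by
    intro i
    have h1 := hpos (hM.eigenvectorBasis hn.symm i)
    rw [hM.apply_eigenvectorBasis] at h1
    simpa [norm_smul, inner_smul_right, ← hl] using h1
  have hl0 : ∀ i, 0 ≤ l i := fun i => le_trans (by positivity) (hl1 i)
  have hm0 : ∀ i, 0 ≤ t⁻¹ * (1 - a * l i) := by
    intro i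
    have : a * l i ≤ 1 := by
      rcases (hl0 i).eq_or_lt with h | h
      · rw [← h]; simp
      · refine le_of_mul_le_mul_right ?_ h
        nlinarith [hl1 i]
    have : 0 ≤ 1 - a * l i := by linarith
    positivity
  rw [hdM, hdN, abs_of_nonneg (Finset.prod_nonneg fun i _ => hl0 i),
    abs_of_nonneg (Finset.prod_nonneg fun i _ => hm0 i)]
  by_contra! hcon
  have h1 : (∏ i, l i) ^ a * (∏ i, (t⁻¹ * (1 - a * l i))) ^ t ≤ 1 := by
    rw [← Real.finsetProd_rpow _ _ (fun i _ => hl0 i), ← Real.finsetProd_rpow _ _ (fun i _ => hm0 i),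
      ← Finset.prod_mul_distrib]
    refine Finset.prod_le_one (fun i _ => mul_nonneg (Real.rpow_nonneg (hl0 i) _)
      (Real.rpow_nonneg (hm0 i) _)) fun i _ => ?_
    refine (Real.geom_mean_le_arith_mean2_weighted ha.le ht.le (hl0 i) (hm0 i) hat).trans_eq ?_
    field_simp; ring
  have h2 := Real.one_lt_rpow hcon.1 ha
  have h3 := Real.one_lt_rpow hcon.2 ht
  nlinarith

lemma lipschitz_image_null [FiniteDimensional ℝ E] [MeasurableSpace E] [BorelSpace E] {K : ℝ≥0}
    {f : E → E} (hf : LipschitzWith K f) {D : Set E} (hD : volume D = 0) :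
    volume (f '' D) = 0 := by
  have h1 : (volume : Measure E) ≪ μH[Module.finrank ℝ E] :=
    Measure.absolutelyContinuous_isAddHaarMeasure _ _
  have h2 : μH[Module.finrank ℝ E] ≪ (volume : Measure E) :=
    Measure.absolutelyContinuous_isAddHaarMeasure _ _
  apply h1
  refine le_antisymm ((hf.hausdorffMeasure_image_le (by positivity) D).trans ?_) bot_le
  rw [h2 hD, mul_zero]

/-- The differential of the resolvent satisfies the determinant alternative. -/
lemma resolvent_det [FiniteDimensional ℝ E] {p : E → ℝ} {a t : ℝ} (ha : 0 < a) (ht : 0 < t)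
    (hat : a + t = 1) {S : E → E}
    (hS : ∀ y x, p (S y) + inner ℝ (y - a • S y) (x - S y) ≤ p x) {y : E} {M : E →L[ℝ] E}
    (hM : HasFDerivAt S M y) :
    |M.det| ≤ 1 ∨ |(t⁻¹ • (ContinuousLinearMap.id ℝ E - a • M)).det| ≤ 1 := by
  have hsymm : (M : E →ₗ[ℝ] E).IsSymmetric := by
    intro v w
    have h1 : ∀ z, HasFDerivAt (fun y => inner ℝ (S y) y - p (S y) - a / 2 * ‖S y‖ ^ 2)
        (innerSL ℝ (S z)) z := fun z => (resolvent_hasGradient ha hS z).hasFDerivAt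
    have h2 : HasFDerivAt (fun z => innerSL ℝ (S z)) ((innerSL ℝ).comp M) y :=
      (innerSL ℝ (E := E)).hasFDerivAt.comp y hM
    have h3 := second_derivative_symmetric h1 h2 v w
    simp at h3
    simp [h3, real_inner_comm]
  have hpos : ∀ v, a * ‖M v‖ ^ 2 ≤ inner ℝ v (M v) := by
    intro v
    have hl : Tendsto (fun s : ℝ => s⁻¹ • (S (y + s • v) - S y)) (𝓝[≠] 0) (𝓝 (M v)) := by
      have := (hM.hasLineDerivAt v).tendsto_slope_zero
      simpa using this
    have hA : Tendsto (fun s : ℝ => a * ‖s⁻¹ • (S (y + s • v) - S y)‖ ^ 2) (𝓝[≠] 0)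
        (𝓝 (a * ‖M v‖ ^ 2)) := (hl.norm.pow 2).const_mul a
    have hB : Tendsto (fun s : ℝ => inner ℝ v (s⁻¹ • (S (y + s • v) - S y))) (𝓝[≠] 0)
        (𝓝 (inner ℝ v (M v))) := tendsto_const_nhds.inner hl
    refine le_of_tendsto_of_tendsto hA hB ?_
    filter_upwards [self_mem_nhdsWithin] with s hs
    have hs' : s ≠ 0 := hs
    have h1 := resolvent_mono (hS (y + s • v)) (hS y)
    rw [add_sub_cancel_left, inner_smul_left, conj_trivial] at h1
    rw [norm_smul, mul_pow, inner_smul_right, Real.norm_eq_abs, sq_abs]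
    have h2 : 0 < s ^ 2 := by positivity
    calc a * (s⁻¹ ^ 2 * ‖S (y + s • v) - S y‖ ^ 2)
        = (s ^ 2)⁻¹ * (a * ‖S (y + s • v) - S y‖ ^ 2) := by field_simp
      _ ≤ (s ^ 2)⁻¹ * (s * inner ℝ v (S (y + s • v) - S y)) := by gcongr
      _ = _ := by field_simp
  exact det_dichotomy hsymm ha ht hat hpos

lemma image_le_of_det_le [FiniteDimensional ℝ E] [MeasurableSpace E] [BorelSpace E]
    {f : E → E} {f' : E → E →L[ℝ] E} {s : Set E} (hs : MeasurableSet s)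
    (hf : ∀ x ∈ s, HasFDerivAt f (f' x) x) (hd : ∀ x ∈ s, |(f' x).det| ≤ 1) :
    volume (f '' s) ≤ volume s := by
  refine (addHaar_image_le_lintegral_abs_det_fderiv volume hs
    fun x hx => (hf x hx).hasFDerivWithinAt).trans ?_
  calc ∫⁻ x in s, ENNReal.ofReal |(f' x).det| ≤ ∫⁻ x in s, 1 := by
        refine setLIntegral_mono measurable_const fun x hx => ?_
        exact ENNReal.ofReal_le_one.2 (hd x hx)
    _ = volume s := by simp

lemma withDensity_le_volume [FiniteDimensional ℝ E] [MeasurableSpace E] [BorelSpace E]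
    {ρ : E → ℝ} (h : ∀ x, ρ x ∈ Icc (0:ℝ) 1) :
    (volume.withDensity fun x => ENNReal.ofReal (ρ x)) ≤ volume := by
  calc (volume.withDensity fun x => ENNReal.ofReal (ρ x)) ≤ volume.withDensity 1 :=
        withDensity_mono (Eventually.of_forall fun x => ENNReal.ofReal_le_one.2 (h x).2)
    _ = volume := withDensity_one

lemma interpolant_core [FiniteDimensional ℝ E] [MeasurableSpace E] [BorelSpace E]
    {μ ν : Measure E} (hμ : μ ≤ volume) (hν : ν ≤ volume)
    {ψ : E → ℝ} (hψ : ConvexOn ℝ univ ψ) {T : E → E} (hT : Measurable T)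
    (hgrad : ∀ᵐ x, HasGradientAt ψ (T x) x) (hpush : μ.map T = ν)
    {a t : ℝ} (ha : 0 < a) (ht : 0 < t) (hat : a + t = 1) {A : Set E} (hA : MeasurableSet A) :
    μ.map (fun x => a • x + t • T x) A ≤ volume A := by
  obtain ⟨x₀, hx₀⟩ := hgrad.exists
  set p : E → ℝ := fun x => t * ψ x with hp
  have hpc : ConvexOn ℝ univ p := by simpa [hp] using hψ.smul ht.le
  have hsub : ∀ x, HasGradientAt ψ (T x) x → ∀ z, p x + inner ℝ (t • T x) (z - x) ≤ p z := by
    intro x hx z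
    have h1 := gradient_ineq hψ hx z
    rw [inner_smul_left, conj_trivial]
    simp only [hp]
    nlinarith
  choose S hS using exists_resolvent hpc ha (hsub x₀ hx₀)
  have hSlip : LipschitzWith (Real.toNNReal a⁻¹) S := by
    refine LipschitzWith.of_dist_le_mul fun y z => ?_
    rw [dist_eq_norm, dist_eq_norm, Real.coe_toNNReal _ (by positivity)]
    exact resolvent_norm ha (hS y) (hS z)
  have hST : ∀ x, HasGradientAt ψ (T x) x → S (a • x + t • T x) = x := by
    intro x hx
    have h1 := resolvent_norm ha (hS (a • x + t • T x)) (s' := x) (y' := a • x + t • T x) (by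
      rw [add_sub_cancel_left]; exact hsub x hx)
    rw [sub_self, norm_zero, mul_zero] at h1
    exact sub_eq_zero.1 (norm_le_zero_iff.1 h1)
  set R : E → E := fun y => t⁻¹ • (y - a • S y) with hR
  have hRT : ∀ x, HasGradientAt ψ (T x) x → R (a • x + t • T x) = T x := by
    intro x hx
    simp only [hR, hST x hx, add_sub_cancel_left]
    rw [smul_smul, inv_mul_cancel₀ ht.ne', one_smul]
  have hgμ : ∀ᵐ x ∂μ, HasGradientAt ψ (T x) x := (Measure.absolutelyContinuous_of_le hμ) hgrad
  have hTt : Measurable fun x => a • x + t • T x := by fun_prop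
  -- the two bounds
  have bS : ∀ B : Set E, MeasurableSet B →
      μ.map (fun x => a • x + t • T x) B ≤ volume (S '' B) := by
    intro B hB
    rw [Measure.map_apply hTt hB]
    refine le_trans (measure_mono_ae ?_) (hμ (S '' B))
    filter_upwards [hgμ] with x hx hxB
    exact ⟨_, hxB, hST x hx⟩
  have bR : ∀ B : Set E, MeasurableSet B →
      μ.map (fun x => a • x + t • T x) B ≤ volume (R '' B) := by
    intro B hB
    rw [Measure.map_apply hTt hB]
    calc μ ((fun x => a • x + t • T x) ⁻¹' B) ≤ μ (T ⁻¹' (toMeasurable ν (R '' B))) := by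
          refine measure_mono_ae ?_
          filter_upwards [hgμ] with x hx hxB
          exact subset_toMeasurable ν _ ⟨_, hxB, hRT x hx⟩
      _ = ν (R '' B) := by
          rw [← Measure.map_apply hT (measurableSet_toMeasurable _ _), hpush,
            measure_toMeasurable]
      _ ≤ volume (R '' B) := hν _
  -- decomposition
  set D : Set E := {y | DifferentiableAt ℝ S y} with hD
  have hDm : MeasurableSet D := measurableSet_of_differentiableAt ℝ S
  set P : Set E := {y | |(fderiv ℝ S y).det| ≤ 1} with hP
  have hPm : MeasurableSet P := by
    have : Measurable fun y => |(fderiv ℝ S y).det| :=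
      (ContinuousLinearMap.continuous_det.measurable.comp (measurable_fderiv ℝ S)).abs
    exact this measurableSet_Iic
  have hDnull : volume (A \ D) = 0 :=
    measure_mono_null (fun y hy => hy.2) (hSlip.ae_differentiableAt (μ := volume))
  set κ := μ.map (fun x => a • x + t • T x) with hκ
  have e3 : κ (A \ D) ≤ 0 :=
    (bS _ (hA.diff hDm)).trans_eq (lipschitz_image_null hSlip hDnull)
  have m1 : MeasurableSet ((A ∩ D) ∩ P) := (hA.inter hDm).inter hPm
  have m2 : MeasurableSet ((A ∩ D) \ P) := (hA.inter hDm).diff hPm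
  have e1 : κ ((A ∩ D) ∩ P) ≤ volume ((A ∩ D) ∩ P) :=
    (bS _ m1).trans (image_le_of_det_le (f' := fderiv ℝ S) m1
      (fun x hx => DifferentiableAt.hasFDerivAt hx.1.2) fun x hx => hx.2)
  have e2 : κ ((A ∩ D) \ P) ≤ volume ((A ∩ D) \ P) := by
    refine (bR _ m2).trans (image_le_of_det_le
      (f' := fun y => t⁻¹ • (ContinuousLinearMap.id ℝ E - a • fderiv ℝ S y)) m2
      (fun x hx => ?_) fun x hx => ?_)
    · have h1 : HasFDerivAt S (fderiv ℝ S x) x := DifferentiableAt.hasFDerivAt hx.1.2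
      exact ((hasFDerivAt_id x).sub (h1.const_smul a)).const_smul t⁻¹
    · have h1 : HasFDerivAt S (fderiv ℝ S x) x := DifferentiableAt.hasFDerivAt hx.1.2
      exact (resolvent_det ha ht hat hS h1).resolve_left hx.2
  calc κ A = κ (A ∩ D) + κ (A \ D) := (measure_inter_add_sdiff A hDm).symm
    _ = κ ((A ∩ D) ∩ P) + κ ((A ∩ D) \ P) + κ (A \ D) := by
        rw [measure_inter_add_sdiff (A ∩ D) hPm]
    _ ≤ volume ((A ∩ D) ∩ P) + volume ((A ∩ D) \ P) + 0 := by gcongr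
    _ = volume (A ∩ D) := by rw [add_zero, measure_inter_add_sdiff (A ∩ D) hPm]
    _ ≤ volume A := measure_mono inter_subset_left

end helpers

/-- Along the displacement interpolant between two densities with values
in `[0,1]` (via the Brenier map `T = ∇ψ`), the interpolated measure
`μ_t = ((1−t)·id + t·T)_#(ρ₀ dx)` satisfies `μ_t(A) ≤ |A|` for every Borel set `A`. -/
theorem displacement_interpolant_density_le_one
    (d : ℕ) (ρ₀ ρ₁ : EuclideanSpace ℝ (Fin d) → ℝ)
    (h₀meas : Measurable ρ₀) (h₁meas : Measurable ρ₁)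
    (h₀range : ∀ x, ρ₀ x ∈ Icc (0:ℝ) 1) (h₁range : ∀ x, ρ₁ x ∈ Icc (0:ℝ) 1)
    (h₀supp : HasCompactSupport ρ₀) (h₁supp : HasCompactSupport ρ₁)
    (hint : ∫ x, ρ₀ x = ∫ x, ρ₁ x) (hposint : 0 < ∫ x, ρ₀ x)
    (ψ : EuclideanSpace ℝ (Fin d) → ℝ) (hψconv : ConvexOn ℝ Set.univ ψ)
    (T : EuclideanSpace ℝ (Fin d) → EuclideanSpace ℝ (Fin d)) (hT : Measurable T)
    (hgrad : ∀ᵐ x, HasGradientAt ψ (T x) x)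
    (hpush :
      (volume.withDensity fun x => ENNReal.ofReal (ρ₀ x)).map T =
        volume.withDensity fun x => ENNReal.ofReal (ρ₁ x)) :
    ∀ t ∈ Icc (0:ℝ) 1, ∀ A : Set (EuclideanSpace ℝ (Fin d)), MeasurableSet A →
      ((volume.withDensity fun x => ENNReal.ofReal (ρ₀ x)).map
          (fun x => (1 - t) • x + t • T x)) A ≤ volume A := by
  intro t ht A hA
  rcases ht.1.eq_or_lt with h0 | h0
  · subst h0
    have : (fun x : EuclideanSpace ℝ (Fin d) => (1 - (0:ℝ)) • x + (0:ℝ) • T x) = id := by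
      ext x; simp
    rw [this, Measure.map_id]
    exact withDensity_le_volume h₀range A
  rcases ht.2.eq_or_lt with h1 | h1
  · subst h1
    have : (fun x : EuclideanSpace ℝ (Fin d) => (1 - (1:ℝ)) • x + (1:ℝ) • T x) = T := by
      ext x; simp
    rw [this, hpush]
    exact withDensity_le_volume h₁range A
  exact interpolant_core (withDensity_le_volume h₀range) (withDensity_le_volume h₁range) hψconv hT
    hgrad hpush (sub_pos.2 h1) h0 (by ring) hA
end
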